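/- Let p̄ = (p(1), p(2), …) be a sequence with 0 ≤ p(i) < 1 for all i such that ∏_{i=1}^∞ (1 − p(i)) > 0. Then for every first-order sentence ψ of the language L_+, the limit lim_{n→∞} Prob(n,p̄;ψ) exists. -/

import Mathlib

open FirstOrder Filter

namespace RandomGraph

/-- The set of potential edges of a graph on `Fin n` (pairs `(v,w)` with `v < w`).
Vertex `v : Fin n` represents the number `v + 1` of the interval `[n] = {1, …, n}`. -/
abbrev EdgeIdx (n : ℕ) := {e : Fin n × Fin n // e.1 < e.2}

/-- An outcome of the random graph on `[n]`: a choice of which potential edges are present. -/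
abbrev Sample (n : ℕ) := EdgeIdx n → Bool

/-- Adjacency of two vertices (described by their values in `Fin n`) in the outcome `ω`. -/
def adjVal {n : ℕ} (ω : Sample n) (a b : ℕ) : Prop :=
  ∃ e : EdgeIdx n, ω e = true ∧
    ((e.1.1.val = a ∧ e.1.2.val = b) ∨ (e.1.1.val = b ∧ e.1.2.val = a))

/-- Adjacency of two vertices in the outcome `ω`. -/
def sampleAdj {n : ℕ} (ω : Sample n) (v w : Fin n) : Prop := adjVal ω v.val w.val

/-- The probability of the outcome `ω` in the model `G(n, p̄)`: each pair of distinct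
vertices at distance `d` is an edge with probability `p d`, independently.  (The value `p 0` is
never used, since distinct vertices are at distance at least 1.) -/
noncomputable def sampleWeight (p : ℕ → ℝ) {n : ℕ} (ω : Sample n) : ℝ :=
  ∏ e : EdgeIdx n,
    (if ω e then p (e.1.2.val - e.1.1.val) else 1 - p (e.1.2.val - e.1.1.val))

/-- The probability of the outcome `ω` in the circular model `C(n, p̄)`: vertices `v, w` are
adjacent with probability `p (min |v-w| (n - |v-w|))`, independently. -/
noncomputable def cWeight (p : ℕ → ℝ) {n : ℕ} (ω : Sample n) : ℝ :=
  ∏ e : EdgeIdx n,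
    (if ω e then p (min (e.1.2.val - e.1.1.val) (n - (e.1.2.val - e.1.1.val)))
      else 1 - p (min (e.1.2.val - e.1.1.val) (n - (e.1.2.val - e.1.1.val))))

open scoped Classical in
/-- The probability of the event `P` in the random graph `G(n, p̄)`. -/
noncomputable def Pr (p : ℕ → ℝ) (n : ℕ) (P : Sample n → Prop) : ℝ :=
  ∑ ω : Sample n, if P ω then sampleWeight p ω else 0

open scoped Classical in
/-- The probability of the event `P` in the circular random graph `C(n, p̄)`. -/
noncomputable def cPr (p : ℕ → ℝ) (n : ℕ) (P : Sample n → Prop) : ℝ :=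
  ∑ ω : Sample n, if P ω then cWeight p ω else 0

/-! ### The language `L` of graphs (also used as the language `L^c`) -/

/-- An outcome `ω` of the random graph, viewed as a structure of `FirstOrder.Language.graph`,
the language with a single binary adjacency predicate. -/
def graphStructure {n : ℕ} (ω : Sample n) : Language.graph.Structure (Fin n) where
  RelMap | .adj => fun x => sampleAdj ω (x 0) (x 1)

/-- Satisfaction of a sentence of the language `L` in the outcome `ω`. -/
def SatL {n : ℕ} (ω : Sample n) (ψ : Language.graph.Sentence) : Prop :=
  @Language.Sentence.Realize _ _ (graphStructure ω) ψ

/-- `Prob(n, p̄; ψ)` for a sentence `ψ` of the language `L`. -/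
noncomputable def ProbL (p : ℕ → ℝ) (n : ℕ) (ψ : Language.graph.Sentence) : ℝ :=
  Pr p n fun ω => SatL ω ψ

/-- The probability that `C(n, p̄)` satisfies a sentence `ψ` of the language `L^c = L`. -/
noncomputable def cProbL (p : ℕ → ℝ) (n : ℕ) (ψ : Language.graph.Sentence) : ℝ :=
  cPr p n fun ω => SatL ω ψ

/-! ### The language `L₊` -/

/-- The constants of the language `L₊`: the first element `1` and the last element `n`. -/
inductive plusFunc : ℕ → Type
  | one : plusFunc 0
  | last : plusFunc 0

/-- The relations of `L₊`: adjacency and successor. -/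
inductive plusRel : ℕ → Type
  | adj : plusRel 2
  | succ : plusRel 2

/-- The language `L₊` with adjacency, successor (`x = y + 1`), and constants `1` and `n`. -/
def Lplus : Language := ⟨plusFunc, plusRel⟩

/-- An outcome `ω` of the random graph on `[m+1]`, as an `L₊`-structure. -/
def plusStructure {m : ℕ} (ω : Sample (m + 1)) : Lplus.Structure (Fin (m + 1)) where
  funMap | .one => fun _ => 0 | .last => fun _ => Fin.last m
  RelMap
    | .adj => fun x => sampleAdj ω (x 0) (x 1)
    | .succ => fun x => (x 0).val = (x 1).val + 1

/-- `Prob(n, p̄; ψ)` for a sentence `ψ` of `L₊` (set to `0` in the irrelevant case `n = 0`,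
where the constants cannot be interpreted). -/
noncomputable def ProbPlus (p : ℕ → ℝ) : ℕ → Lplus.Sentence → ℝ
  | 0, _ => 0
  | (m + 1), ψ => Pr p (m + 1) fun ω => @Language.Sentence.Realize _ _ (plusStructure ω) ψ

/-! ### The language `L≤` -/

/-- The relations of `L≤`: adjacency and linear order. -/
inductive leRel : ℕ → Type
  | adj : leRel 2
  | le : leRel 2

/-- The language `L≤` with adjacency and a linear order. -/
def Lle : Language := ⟨fun _ => Empty, leRel⟩

/-- An outcome `ω` of the random graph on `[n]`, as an `L≤`-structure. -/
def leStructure {n : ℕ} (ω : Sample n) : Lle.Structure (Fin n) where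
  funMap := fun f _ => Empty.elim f
  RelMap
    | .adj => fun x => sampleAdj ω (x 0) (x 1)
    | .le => fun x => x 0 ≤ x 1

/-- Satisfaction of a sentence of `L≤` in the outcome `ω`. -/
def SatLe {n : ℕ} (ω : Sample n) (ψ : Lle.Sentence) : Prop :=
  @Language.Sentence.Realize _ _ (leStructure ω) ψ

/-- `Prob(n, p̄; ψ)` for a sentence `ψ` of `L≤`. -/
noncomputable def ProbLe (p : ℕ → ℝ) (n : ℕ) (ψ : Lle.Sentence) : ℝ :=
  Pr p n fun ω => SatLe ω ψ

/-! ### The circular languages `L₊^c` and `L≤^c` -/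

/-- The relations of `L₊^c`: adjacency and cyclic successor. -/
inductive plusCRel : ℕ → Type
  | adj : plusCRel 2
  | succ : plusCRel 2

/-- The language `L₊^c`, with adjacency and cyclic successor (`x = y + 1 (mod n)`). -/
def LplusC : Language := ⟨fun _ => Empty, plusCRel⟩

/-- An outcome `ω` of the circular random graph on `[n]`, as an `L₊^c`-structure. -/
def plusCStructure {n : ℕ} (ω : Sample n) : LplusC.Structure (Fin n) where
  funMap := fun f _ => Empty.elim f
  RelMap
    | .adj => fun x => sampleAdj ω (x 0) (x 1)
    | .succ => fun x => (x 0).val = ((x 1).val + 1) % n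

/-- The probability that `C(n, p̄)` satisfies a sentence `ψ` of the language `L₊^c`. -/
noncomputable def cProbPlus (p : ℕ → ℝ) (n : ℕ) (ψ : LplusC.Sentence) : ℝ :=
  cPr p n fun ω => @Language.Sentence.Realize _ _ (plusCStructure ω) ψ

/-- The relations of `L≤^c`: adjacency and the ternary clockwise-order predicate. -/
inductive cycRel : ℕ → Type
  | adj : cycRel 2
  | btw : cycRel 3

/-- The language `L≤^c`, with adjacency and the ternary clockwise-order predicate `C`. -/
def Lcyc : Language := ⟨fun _ => Empty, cycRel⟩

/-- `C(a, b, c)`: `a ≤ b ≤ c` holds after some cyclic permutation of `(a, b, c)`. -/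
def cyclicBtw {n : ℕ} (a b c : Fin n) : Prop :=
  (a ≤ b ∧ b ≤ c) ∨ (b ≤ c ∧ c ≤ a) ∨ (c ≤ a ∧ a ≤ b)

/-- An outcome `ω` of the circular random graph on `[n]`, as an `L≤^c`-structure. -/
def cycStructure {n : ℕ} (ω : Sample n) : Lcyc.Structure (Fin n) where
  funMap := fun f _ => Empty.elim f
  RelMap
    | .adj => fun x => sampleAdj ω (x 0) (x 1)
    | .btw => fun x => cyclicBtw (x 0) (x 1) (x 2)

/-- Satisfaction of a sentence of `L≤^c` in the outcome `ω`. -/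
def SatCyc {n : ℕ} (ω : Sample n) (ψ : Lcyc.Sentence) : Prop :=
  @Language.Sentence.Realize _ _ (cycStructure ω) ψ

/-- The probability that `C(n, p̄)` satisfies a sentence `ψ` of the language `L≤^c`. -/
noncomputable def cProbCyc (p : ℕ → ℝ) (n : ℕ) (ψ : Lcyc.Sentence) : ℝ :=
  cPr p n fun ω => SatCyc ω ψ

/-!
The hypothesis makes `∑ p i` finite, so a bounded set of vertices rarely meets a long edge.

Two structures satisfy the same sentences of quantifier rank `k` as soon as the radius-`2 ^ k`
neighbourhoods of their constants look alike and every local type that occurs away from the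
constants of one occurs far from any few prescribed points of the other: this is a strategy for
Duplicator in the Ehrenfeucht–Fraïssé game. In the random graph the second condition holds with
probability tending to one. A finite pattern of positive probability occupies a given interval, with
no edge leaving it, with probability bounded below; up to long edges, these events are independent
for distant intervals, so the pattern occurs in every sufficiently long window. The truth value of a
sentence is therefore almost surely a function of the local type of the two end vertices. With
probability close to one that type is determined by the edges among the first `L` and among the last
`L` vertices, whose law does not depend on `n`, so its distribution converges.
-/

/-! ### Local types -/

section LocalType

variable {ι X Y : Type*} {R : ι → X → X → Prop} {R' : ι → Y → Y → Prop}

/-- The Gaifman graph of a family of binary relations: distinct points are adjacent when some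
relation of the family holds between them, in either order. -/
def gaifman (R : ι → X → X → Prop) : SimpleGraph X :=
  SimpleGraph.fromRel fun x y => ∃ r, R r x y

/-- `y` lies in the ball of radius `d` about `x` in the Gaifman graph. -/
def Near (R : ι → X → X → Prop) (d : ℕ) (x y : X) : Prop :=
  (gaifman R).edist x y ≤ d

lemma near_self (d : ℕ) (x : X) : Near R d x x := by
  simp [Near]

lemma Near.symm {d : ℕ} {x y : X} (h : Near R d x y) : Near R d y x := by
  rwa [Near, SimpleGraph.edist_comm]

lemma Near.mono {d e : ℕ} (hde : d ≤ e) {x y : X} (h : Near R d x y) : Near R e x y :=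
  h.trans (by exact_mod_cast hde)

lemma Near.trans {d e : ℕ} {x y z : X} (hxy : Near R d x y) (hyz : Near R e y z) :
    Near R (d + e) x z := by
  rw [Near, Nat.cast_add]
  exact SimpleGraph.edist_triangle.trans (add_le_add hxy hyz)

lemma near_zero_iff {x y : X} : Near R 0 x y ↔ x = y := by
  simp [Near]

lemma near_one_iff {x y : X} : Near R 1 x y ↔ x = y ∨ (gaifman R).Adj x y := by
  rw [Near, Nat.cast_one, SimpleGraph.edist_le_one_iff_adj_or_eq, or_comm]

lemma near_one_of_rel {x y : X} {r : ι} (h : R r x y) : Near R 1 x y := by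
  rw [near_one_iff, gaifman, SimpleGraph.fromRel_adj]
  exact or_iff_not_imp_left.2 fun hne => ⟨hne, Or.inl ⟨r, h⟩⟩

lemma ne_and_not_rel_of_not_near {x y : X} (h : ¬ Near R 1 x y) : x ≠ y ∧ ∀ r, ¬ R r x y :=
  ⟨fun hxy => h (hxy ▸ near_self _ _), fun _ hr => h (near_one_of_rel hr)⟩

lemma Near.exists_of_succ {d : ℕ} {x y : X} (h : Near R (d + 1) x y) :
    ∃ z, Near R d x z ∧ Near R 1 z y := by
  obtain ⟨q, hq⟩ := (gaifman R).exists_walk_of_edist_ne_top (ne_top_of_le_ne_top (by simp) h)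
  refine ⟨q.getVert d, ?_, ?_⟩
  · exact (SimpleGraph.Walk.edist_le (q.take d)).trans (by simp)
  · have hlen : q.length ≤ d + 1 := by
      exact_mod_cast hq.trans_le h
    refine (SimpleGraph.Walk.edist_le (q.drop d)).trans ?_
    simp only [SimpleGraph.Walk.drop_length]
    exact_mod_cast Nat.sub_le_iff_le_add'.2 hlen

/-- The possible values of `localType`: atomic diagrams of `i`-tuples at depth `0`; at depth
`j + 1`, a depth-`j` type together with, for each point of the tuple, a set of depth-`j` types of
one-point extensions of the tuple. -/
def LocalType (ι : Type*) : ℕ → ℕ → Type _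
  | 0, i => Fin i → Fin i → Prop × (ι → Prop)
  | j + 1, i => LocalType ι j i × (Fin i → Set (LocalType ι j (i + 1)))

instance LocalType.instFinite [Finite ι] : ∀ j i : ℕ, Finite (LocalType ι j i)
  | 0, i => inferInstanceAs (Finite (Fin i → Fin i → Prop × (ι → Prop)))
  | j + 1, i =>
    have : Finite (LocalType ι j i) := LocalType.instFinite j i
    have : Finite (LocalType ι j (i + 1)) := LocalType.instFinite j (i + 1)
    inferInstanceAs (Finite (LocalType ι j i × (Fin i → Set (LocalType ι j (i + 1)))))

/-- The isomorphism type, up to `j` rounds of an Ehrenfeucht–Fraïssé game, of a tuple `w` and its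
surroundings: with `j + 1` rounds to go the next move has to be made within Gaifman distance
`2 ^ j` of a point that is already on the board. -/
def localType (R : ι → X → X → Prop) : ∀ (j : ℕ) {i : ℕ}, (Fin i → X) → LocalType ι j i
  | 0, _, w => fun a b => (w a = w b, fun r => R r (w a) (w b))
  | j + 1, _, w =>
    (localType R j w,
      fun a => {t | ∃ x, Near R (2 ^ j) (w a) x ∧ localType R j (Fin.snoc w x) = t})

/-- Every local move on the tuple `w` can be answered by a local move on the tuple `w'`. -/
def Forth (R : ι → X → X → Prop) (R' : ι → Y → Y → Prop) (j : ℕ) {i : ℕ} (w : Fin i → X)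
    (w' : Fin i → Y) : Prop :=
  ∀ a x, Near R (2 ^ j) (w a) x →
    ∃ y, Near R' (2 ^ j) (w' a) y ∧ localType R j (Fin.snoc w x) = localType R' j (Fin.snoc w' y)

lemma localType_zero_eq_iff {i : ℕ} {w : Fin i → X} {w' : Fin i → Y} :
    localType R 0 w = localType R' 0 w' ↔
      ∀ a b, (w a = w b ↔ w' a = w' b) ∧ ∀ r, R r (w a) (w b) ↔ R' r (w' a) (w' b) := by
  refine funext_iff.trans <| forall_congr' fun a => funext_iff.trans <| forall_congr' fun b =>
    Prod.ext_iff.trans ?_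
  simp only [localType, funext_iff, eq_iff_iff]

lemma forall_localType_snd_subset_iff {j i : ℕ} {w : Fin i → X} {w' : Fin i → Y} :
    (∀ a, (localType R (j + 1) w).2 a ⊆ (localType R' (j + 1) w').2 a) ↔ Forth R R' j w w' := by
  refine forall_congr' fun a => ⟨fun h x hx => ?_, ?_⟩
  · exact (h ⟨x, hx, rfl⟩).imp fun _ hy => ⟨hy.1, hy.2.symm⟩
  · rintro h _ ⟨x, hx, rfl⟩
    exact (h x hx).imp fun _ hy => ⟨hy.1, hy.2.symm⟩

lemma localType_succ_eq_iff {j i : ℕ} {w : Fin i → X} {w' : Fin i → Y} :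
    localType R (j + 1) w = localType R' (j + 1) w' ↔
      localType R j w = localType R' j w' ∧ Forth R R' j w w' ∧ Forth R' R j w' w := by
  rw [← forall_localType_snd_subset_iff, ← forall_localType_snd_subset_iff, ← forall_and]
  exact Prod.ext_iff.trans <| and_congr_right fun _ => funext_iff.trans <|
    forall_congr' fun _ => Set.Subset.antisymm_iff

lemma localType_zero_of_localType_eq {j i : ℕ} {w : Fin i → X} {w' : Fin i → Y}
    (h : localType R j w = localType R' j w') : localType R 0 w = localType R' 0 w' := by
  induction j with
  | zero => exact h
  | succ j ih => exact ih (localType_succ_eq_iff.1 h).1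

/-- No point of the tuple `u` is within distance `d` of a point of the tuple `v`. -/
def Apart (R : ι → X → X → Prop) (d : ℕ) {i k : ℕ} (u : Fin i → X) (v : Fin k → X) : Prop :=
  ∀ a b, ¬ Near R d (u a) (v b)

section Apart

variable {i k : ℕ} {u : Fin i → X} {v : Fin k → X}

lemma Apart.symm {d : ℕ} (h : Apart R d u v) : Apart R d v u :=
  fun a b hab => h b a hab.symm

lemma Apart.mono {d e : ℕ} (hde : d ≤ e) (h : Apart R e u v) : Apart R d u v :=
  fun a b hab => h a b (hab.mono hde)

lemma Apart.snoc_left {d e : ℕ} (h : Apart R (d + e) u v) {a : Fin i} {x : X}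
    (hx : Near R d (u a) x) : Apart R e (Fin.snoc u x : Fin (i + 1) → X) v := by
  intro b c
  induction b using Fin.lastCases with
  | last =>
    rw [Fin.snoc_last]
    exact fun hc => h a c (hx.trans hc)
  | cast b =>
    rw [Fin.snoc_castSucc]
    exact fun hc => h b c (hc.mono (Nat.le_add_left e d))

end Apart

lemma sumElim_snoc_comp {i k l : ℕ} (u : Fin i → X) (v : Fin k → X) (σ : Fin l → Fin i ⊕ Fin k)
    (x : X) :
    Sum.elim (Fin.snoc u x : Fin (i + 1) → X) v ∘
        (Fin.snoc (Sum.map Fin.castSucc id ∘ σ) (Sum.inl (Fin.last i)) :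
          Fin (l + 1) → Fin (i + 1) ⊕ Fin k) =
      Fin.snoc (Sum.elim u v ∘ σ) x := by
  funext c
  induction c using Fin.lastCases with
  | last => simp
  | cast c => rcases h : σ c with a | b <;> simp [h]

lemma sumElim_comp_swap {i k l : ℕ} (u : Fin i → X) (v : Fin k → X) (σ : Fin l → Fin i ⊕ Fin k) :
    Sum.elim v u ∘ (Sum.swap ∘ σ) = Sum.elim u v ∘ σ := by
  rw [← Function.comp_assoc, Sum.elim_swap]

/-- The local types of two tuples that are far apart determine the local types of all tuples
assembled from their entries. -/
def Glues (R : ι → X → X → Prop) (R' : ι → Y → Y → Prop) (j : ℕ) : Prop :=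
  ∀ ⦃i k l : ℕ⦄ (σ : Fin l → Fin i ⊕ Fin k) ⦃u : Fin i → X⦄ ⦃v : Fin k → X⦄ ⦃u' : Fin i → Y⦄
    ⦃v' : Fin k → Y⦄, localType R j u = localType R' j u' → localType R j v = localType R' j v' →
    Apart R (2 ^ j) u v → Apart R' (2 ^ j) u' v' →
    localType R j (Sum.elim u v ∘ σ) = localType R' j (Sum.elim u' v' ∘ σ)

lemma Glues.symm {j : ℕ} (h : Glues R R' j) : Glues R' R j :=
  fun _ _ _ σ _ _ _ _ hu hv hA hA' => (h σ hu.symm hv.symm hA' hA).symm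

lemma glues_zero (R : ι → X → X → Prop) (R' : ι → Y → Y → Prop) : Glues R R' 0 := by
  intro i k l σ u v u' v' hu hv hA hA'
  rw [localType_zero_eq_iff] at hu hv ⊢
  intro a b
  simp only [Function.comp_apply]
  rcases σ a with a | a <;> rcases σ b with b | b <;> simp only [Sum.elim_inl, Sum.elim_inr]
  · exact hu a b
  · simp [ne_and_not_rel_of_not_near (hA a b), ne_and_not_rel_of_not_near (hA' a b)]
  · simp [ne_and_not_rel_of_not_near (hA.symm a b), ne_and_not_rel_of_not_near (hA'.symm a b)]
  · exact hv a b

lemma Glues.exists_of_near_inl {j : ℕ} (h : Glues R R' j) {i k l : ℕ}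
    (σ : Fin l → Fin i ⊕ Fin k) {u : Fin i → X} {v : Fin k → X} {u' : Fin i → Y} {v' : Fin k → Y}
    (hu : Forth R R' j u u') (hv : localType R j v = localType R' j v')
    (hA : Apart R (2 ^ (j + 1)) u v) (hA' : Apart R' (2 ^ (j + 1)) u' v') {a : Fin i} {x : X}
    (hx : Near R (2 ^ j) (u a) x) :
    ∃ y, Near R' (2 ^ j) (u' a) y ∧ localType R j (Fin.snoc (Sum.elim u v ∘ σ) x) =
      localType R' j (Fin.snoc (Sum.elim u' v' ∘ σ) y) := by
  obtain ⟨y, hy, hxy⟩ := hu a x hx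
  rw [pow_succ, mul_two] at hA hA'
  refine ⟨y, hy, ?_⟩
  rw [← sumElim_snoc_comp, ← sumElim_snoc_comp]
  exact h _ hxy hv (hA.snoc_left hx) (hA'.snoc_left hy)

lemma Glues.forth {j : ℕ} (h : Glues R R' j) {i k l : ℕ} (σ : Fin l → Fin i ⊕ Fin k)
    {u : Fin i → X} {v : Fin k → X} {u' : Fin i → Y} {v' : Fin k → Y}
    (hu : localType R (j + 1) u = localType R' (j + 1) u')
    (hv : localType R (j + 1) v = localType R' (j + 1) v')
    (hA : Apart R (2 ^ (j + 1)) u v) (hA' : Apart R' (2 ^ (j + 1)) u' v') :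
    Forth R R' j (Sum.elim u v ∘ σ) (Sum.elim u' v' ∘ σ) := by
  rw [localType_succ_eq_iff] at hu hv
  intro c x hx
  rw [Function.comp_apply] at hx ⊢
  rcases hσ : σ c with a | b <;> simp only [hσ, Sum.elim_inl, Sum.elim_inr] at hx ⊢
  · exact h.exists_of_near_inl σ hu.2.1 hv.1 hA hA' hx
  · rw [← sumElim_comp_swap u v σ, ← sumElim_comp_swap u' v' σ]
    exact h.exists_of_near_inl _ hv.2.1 hu.1 hA.symm hA'.symm hx

theorem glues (R : ι → X → X → Prop) (R' : ι → Y → Y → Prop) : ∀ j, Glues R R' j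
  | 0 => glues_zero R R'
  | j + 1 => by
    have ih := glues R R' j
    intro i k l σ u v u' v' hu hv hA hA'
    have hmono : 2 ^ j ≤ 2 ^ (j + 1) := Nat.pow_le_pow_right two_pos j.le_succ
    exact localType_succ_eq_iff.2
      ⟨ih σ (localType_succ_eq_iff.1 hu).1 (localType_succ_eq_iff.1 hv).1 (hA.mono hmono)
        (hA'.mono hmono),
      ih.forth σ hu hv hA hA', ih.symm.forth σ hu.symm hv.symm hA' hA⟩

lemma snoc_eq_sumElim_comp {i : ℕ} (w : Fin i → X) (x : X) :
    (Fin.snoc w x : Fin (i + 1) → X) =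
      Sum.elim w ![x] ∘ (Fin.snoc Sum.inl (Sum.inr 0) : Fin (i + 1) → Fin i ⊕ Fin 1) := by
  funext c
  induction c using Fin.lastCases <;> simp

lemma localType_snoc_of_far {j i : ℕ} {w : Fin i → X} {w' : Fin i → Y} {x : X} {y : Y}
    (hw : localType R j w = localType R' j w') (hxy : localType R j ![x] = localType R' j ![y])
    (hx : ∀ a, ¬ Near R (2 ^ j) (w a) x) (hy : ∀ a, ¬ Near R' (2 ^ j) (w' a) y) :
    localType R j (Fin.snoc w x : Fin (i + 1) → X) =
      localType R' j (Fin.snoc w' y : Fin (i + 1) → Y) := by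
  rw [snoc_eq_sumElim_comp w, snoc_eq_sumElim_comp w']
  exact glues R R' j _ hw hxy (fun a b => by simpa [Fin.fin_one_eq_zero b] using hx a)
    (fun a b => by simpa [Fin.fin_one_eq_zero b] using hy a)

section Embedding

variable {f : X → Y}

/-- The image under `f` of the ball of radius `d` about `x` is adjacent to nothing outside the
range of `f`. -/
def IsInterior (R : ι → X → X → Prop) (R' : ι → Y → Y → Prop) (f : X → Y) (d : ℕ) (x : X) :
    Prop :=
  ∀ x', Near R d x x' → ∀ y, Near R' 1 (f x') y → y ∈ Set.range f

lemma IsInterior.of_near {d e : ℕ} {x y : X} (h : IsInterior R R' f (d + e) x)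
    (hxy : Near R d x y) : IsInterior R R' f e y :=
  fun z hz => h z (hxy.trans hz)

lemma IsInterior.mono {d e : ℕ} {x : X} (hde : d ≤ e) (h : IsInterior R R' f e x) :
    IsInterior R R' f d x :=
  fun z hz => h z (hz.mono hde)

lemma near_one_map_iff (hR : ∀ r x y, R' r (f x) (f y) ↔ R r x y)
    (hf : Function.Injective f) {x y : X} : Near R' 1 (f x) (f y) ↔ Near R 1 x y := by
  simp only [near_one_iff, gaifman, SimpleGraph.fromRel_adj, hf.ne_iff, hf.eq_iff, hR]

lemma Near.map (hR : ∀ r x y, R' r (f x) (f y) ↔ R r x y) (hf : Function.Injective f)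
    {d : ℕ} {x y : X} (h : Near R d x y) : Near R' d (f x) (f y) := by
  induction d generalizing y with
  | zero => rw [near_zero_iff.1 h]; exact near_self _ _
  | succ d ih =>
    obtain ⟨z, hxz, hzy⟩ := h.exists_of_succ
    exact (ih hxz).trans ((near_one_map_iff hR hf).2 hzy)

lemma IsInterior.exists_of_near_map (hR : ∀ r x y, R' r (f x) (f y) ↔ R r x y)
    (hf : Function.Injective f) {d e : ℕ} (hed : e ≤ d + 1) {x : X} {y : Y}
    (hx : IsInterior R R' f d x) (h : Near R' e (f x) y) :
    ∃ x', f x' = y ∧ Near R e x x' := by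
  induction e generalizing y with
  | zero => exact ⟨x, near_zero_iff.1 h, near_self _ _⟩
  | succ e ih =>
    obtain ⟨_, hfz, hzy⟩ := h.exists_of_succ
    obtain ⟨z, rfl, hxz⟩ := ih (by omega) hfz
    obtain ⟨x', rfl⟩ := hx z (hxz.mono (by omega)) y hzy
    exact ⟨x', rfl, hxz.trans ((near_one_map_iff hR hf).1 hzy)⟩

theorem localType_comp_of_isInterior (hR : ∀ r x y, R' r (f x) (f y) ↔ R r x y)
    (hf : Function.Injective f) {j i : ℕ} {w : Fin i → X}
    (hw : ∀ a, IsInterior R R' f (2 ^ j) (w a)) : localType R j w = localType R' j (f ∘ w) := by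
  induction j generalizing i with
  | zero => exact localType_zero_eq_iff.2 fun a b => ⟨hf.eq_iff.symm, fun r => (hR r _ _).symm⟩
  | succ j ih =>
    rw [pow_succ, mul_two] at hw
    have hw' a : IsInterior R R' f (2 ^ j) (w a) := (hw a).mono le_self_add
    have snoc_eq {a : Fin i} {x : X} (hx : Near R (2 ^ j) (w a) x) :
        localType R j (Fin.snoc w x : Fin (i + 1) → X) =
          localType R' j (Fin.snoc (f ∘ w) (f x) : Fin (i + 1) → Y) := by
      rw [← Fin.comp_snoc]
      refine ih fun b => ?_
      induction b using Fin.lastCases with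
      | last => simpa only [Fin.snoc_last] using (hw a).of_near hx
      | cast b => simpa only [Fin.snoc_castSucc] using hw' b
    refine localType_succ_eq_iff.2 ⟨ih hw', fun a x hx => ?_, fun a y hy => ?_⟩
    · exact ⟨f x, hx.map hR hf, snoc_eq hx⟩
    · obtain ⟨x, rfl, hx⟩ := (hw' a).exists_of_near_map hR hf le_self_add hy
      exact ⟨x, hx, (snoc_eq hx).symm⟩

end Embedding

end LocalType

/-! ### The Ehrenfeucht–Fraïssé game -/

section Game

variable {L : Language}

/-- The language has no symbols other than constants and binary relations. -/
structure IsBinary (L : Language) : Prop where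
  isEmpty_functions : ∀ n, n ≠ 0 → IsEmpty (L.Functions n)
  isEmpty_relations : ∀ n, n ≠ 2 → IsEmpty (L.Relations n)

/-- The interpretations in `M` of the binary relation symbols of `L`, as a family of relations. -/
def binaryRel (L : Language) (M : Type*) [L.Structure M] (r : L.Relations 2) (x y : M) : Prop :=
  Language.Structure.RelMap r ![x, y]

/-- The maximal number of nested quantifiers. -/
def quantifierRank {α : Type*} : ∀ {n : ℕ}, L.BoundedFormula α n → ℕ
  | _, .falsum => 0
  | _, .equal _ _ => 0
  | _, .rel _ _ => 0
  | _, .imp φ₁ φ₂ => max (quantifierRank φ₁) (quantifierRank φ₂)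
  | _, .all φ => quantifierRank φ + 1

/-- Every point of the first structure that is far from the points `c t` can be answered by a point
of the second structure with the same local type, far from any `K` prescribed points. -/
def FarExtends {ι X Y C : Type*} (R : ι → X → X → Prop) (R' : ι → Y → Y → Prop) (c : C → X)
    (K k : ℕ) : Prop :=
  ∀ j < k, ∀ x, (∀ t, ¬ Near R (2 ^ j) (c t) x) → ∀ s : Finset Y, s.card ≤ K →
    ∃ y, localType R' j ![y] = localType R j ![x] ∧ ∀ z ∈ s, ¬ Near R' (2 ^ j) z y

lemma FarExtends.exists_localType_snoc_eq {ι X Y C : Type*} {R : ι → X → X → Prop}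
    {R' : ι → Y → Y → Prop} {c : C → X} {K k : ℕ} (h : FarExtends R R' c K k) {j i : ℕ}
    (hj : j < k) (hi : i ≤ K) {w : Fin i → X} {w' : Fin i → Y} (hc : ∀ t, ∃ a, w a = c t)
    (hw : localType R (j + 1) w = localType R' (j + 1) w') (x : X) :
    ∃ y, localType R j (Fin.snoc w x : Fin (i + 1) → X) =
      localType R' j (Fin.snoc w' y : Fin (i + 1) → Y) := by
  classical
  rw [localType_succ_eq_iff] at hw
  by_cases hx : ∃ a, Near R (2 ^ j) (w a) x
  · obtain ⟨a, ha⟩ := hx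
    exact (hw.2.1 a x ha).imp fun _ hy => hy.2
  · push Not at hx
    have hcx t : ¬ Near R (2 ^ j) (c t) x := by
      obtain ⟨a, ha⟩ := hc t
      exact ha ▸ hx a
    obtain ⟨y, hyx, hy⟩ := h j hj x hcx (Finset.univ.image w')
      (Finset.card_image_le.trans (by simpa using hi))
    exact ⟨y, localType_snoc_of_far hw.1 hyx.symm hx fun a => hy _ (by simp)⟩

variable {M N : Type*} [L.Structure M] [L.Structure N]

lemma exists_realize_term_eq (hL : IsBinary L) {β : Type*} {i : ℕ} {w : Fin i → M} {w' : Fin i → N}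
    (hc : ∀ c : L.Constants, ∃ a, w a = c ∧ w' a = c) (s : β → Fin i) (t : L.Term β) :
    ∃ a, t.realize (w ∘ s) = w a ∧ t.realize (w' ∘ s) = w' a := by
  rcases t with b | @⟨n, f, ts⟩
  · exact ⟨s b, rfl, rfl⟩
  · obtain rfl : n = 0 := by
      by_contra hn
      exact (hL.isEmpty_functions n hn).false f
    obtain ⟨a, ha, ha'⟩ := hc f
    refine ⟨a, ?_, ?_⟩
    · simp only [ha, Language.Term.realize, Language.constantMap, Subsingleton.elim _ default]
    · simp only [ha', Language.Term.realize, Language.constantMap, Subsingleton.elim _ default]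

lemma snoc_comp_eq_comp_snoc {i n : ℕ} (w : Fin i → M) (f : Fin n → Fin i) (x : M) :
    (Fin.snoc (w ∘ f) x : Fin (n + 1) → M) = (Fin.snoc w x : Fin (i + 1) → M) ∘
      (Fin.snoc (Fin.castSucc ∘ f) (Fin.last i) : Fin (n + 1) → Fin (i + 1)) := by
  funext a
  induction a using Fin.lastCases <;> simp

lemma relMap_comp_iff_of_localType_eq {j i : ℕ} {w : Fin i → M} {w' : Fin i → N}
    (hw : localType (binaryRel L M) j w = localType (binaryRel L N) j w') (r : L.Relations 2)
    (a : Fin 2 → Fin i) :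
    Language.Structure.RelMap r (w ∘ a) ↔ Language.Structure.RelMap r (w' ∘ a) := by
  have := (localType_zero_eq_iff.1 (localType_zero_of_localType_eq hw) (a 0) (a 1)).2 r
  rw [← FinVec.etaExpand_eq (w ∘ a), ← FinVec.etaExpand_eq (w' ∘ a)]
  exact this

lemma realize_of_localType_eq (hL : IsBinary L) {k K : ℕ}
    (hMN : FarExtends (binaryRel L M) (binaryRel L N) ((↑) : L.Constants → M) K k)
    (hNM : FarExtends (binaryRel L N) (binaryRel L M) ((↑) : L.Constants → N) K k)
    {α : Type*} {n : ℕ} (φ : L.BoundedFormula α n) {i j : ℕ} (hφ : quantifierRank φ ≤ j)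
    (hjk : j ≤ k) (hK : i + j ≤ K) {w : Fin i → M} {w' : Fin i → N}
    (hc : ∀ c : L.Constants, ∃ a, w a = c ∧ w' a = c) (g : α → Fin i) (f : Fin n → Fin i)
    (hw : localType (binaryRel L M) j w = localType (binaryRel L N) j w') :
    φ.Realize (w ∘ g) (w ∘ f) ↔ φ.Realize (w' ∘ g) (w' ∘ f) := by
  induction φ generalizing i j with
  | falsum => rfl
  | equal t₁ t₂ =>
    obtain ⟨a, ha, ha'⟩ := exists_realize_term_eq hL hc (Sum.elim g f) t₁
    obtain ⟨b, hb, hb'⟩ := exists_realize_term_eq hL hc (Sum.elim g f) t₂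
    simp only [Language.BoundedFormula.Realize, ← Sum.comp_elim, ha, hb, ha', hb']
    exact (localType_zero_eq_iff.1 (localType_zero_of_localType_eq hw) a b).1
  | @rel n m r ts =>
    obtain rfl : m = 2 := by
      by_contra hm
      exact (hL.isEmpty_relations m hm).false r
    choose a ha ha' using fun t => exists_realize_term_eq hL hc (Sum.elim g f) (ts t)
    simp only [Language.BoundedFormula.Realize, ← Sum.comp_elim, ha, ha']
    exact relMap_comp_iff_of_localType_eq hw r a
  | imp φ₁ φ₂ ih₁ ih₂ =>
    rw [quantifierRank, max_le_iff] at hφ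
    exact imp_congr (ih₁ hφ.1 hjk hK hc g f hw) (ih₂ hφ.2 hjk hK hc g f hw)
  | all φ ih =>
    obtain ⟨j, rfl⟩ := Nat.exists_eq_add_of_le' (le_add_self.trans hφ)
    have step {x : M} {y : N} (hxy : localType (binaryRel L M) j (Fin.snoc w x : Fin (i + 1) → M) =
        localType (binaryRel L N) j (Fin.snoc w' y : Fin (i + 1) → N)) :
        φ.Realize (w ∘ g) (Fin.snoc (w ∘ f) x) ↔ φ.Realize (w' ∘ g) (Fin.snoc (w' ∘ f) y) := by
      have := ih (Nat.le_of_succ_le_succ hφ) (by omega) (by omega)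
        (fun c => (hc c).elim fun a ha => ⟨a.castSucc, by simpa using ha⟩) (Fin.castSucc ∘ g)
        (Fin.snoc (Fin.castSucc ∘ f) (Fin.last i)) hxy
      simpa only [← snoc_comp_eq_comp_snoc, ← Function.comp_assoc, Fin.snoc_comp_castSucc]
        using this
    refine ⟨fun h y => ?_, fun h x => ?_⟩
    · obtain ⟨x, hx⟩ := hNM.exists_localType_snoc_eq (by omega) (by omega)
        (fun c => (hc c).imp fun _ ha => ha.2) hw.symm y
      exact (step hx.symm).1 (h x)
    · obtain ⟨y, hy⟩ := hMN.exists_localType_snoc_eq (by omega) (by omega)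
        (fun c => (hc c).imp fun _ ha => ha.1) hw x
      exact (step hy).2 (h y)

theorem sentence_realize_of_localType_eq (hL : IsBinary L) (ψ : L.Sentence) {i : ℕ}
    (hMN : FarExtends (binaryRel L M) (binaryRel L N) ((↑) : L.Constants → M)
      (i + quantifierRank ψ) (quantifierRank ψ))
    (hNM : FarExtends (binaryRel L N) (binaryRel L M) ((↑) : L.Constants → N)
      (i + quantifierRank ψ) (quantifierRank ψ))
    {w : Fin i → M} {w' : Fin i → N} (hc : ∀ c : L.Constants, ∃ a, w a = c ∧ w' a = c)
    (hw : localType (binaryRel L M) (quantifierRank ψ) w =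
      localType (binaryRel L N) (quantifierRank ψ) w') :
    ψ.Realize M ↔ ψ.Realize N := by
  have := realize_of_localType_eq hL hMN hNM ψ le_rfl le_rfl le_rfl hc Empty.elim Fin.elim0 hw
  simpa only [Language.Sentence.Realize, Language.Formula.Realize, Subsingleton.elim _ default]
    using this

end Game

/-! ### Independent coins -/

section Coins

open MeasureTheory ProbabilityTheory unitInterval

lemma preimage_restrict_image_of_dependsOn {E : Type*} {F : Finset E} {A : Set (E → Bool)}
    (hA : DependsOn (· ∈ A) (F : Set E)) : F.restrict ⁻¹' (F.restrict '' A) = A := by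
  refine Set.Subset.antisymm ?_ (Set.subset_preimage_image _ _)
  rintro ω ⟨η, hη, hηω⟩
  have hagree : ∀ e ∈ F, η e = ω e := fun e he => congrFun hηω ⟨e, he⟩
  exact (hA hagree).mp hη

variable {E E' : Type*} [Fintype E] [Fintype E']

/-- The joint law of independent coins, the coin `e` showing `true` with probability `q e`. -/
noncomputable def coinMeasure (q : E → I) : Measure (E → Bool) :=
  Measure.pi fun e => bernoulliMeasure true false (q e)

instance (q : E → I) : IsProbabilityMeasure (coinMeasure q) :=
  inferInstanceAs (IsProbabilityMeasure (Measure.pi _))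

lemma bernoulliMeasure_real_singleton_bool (q : I) (b : Bool) :
    (bernoulliMeasure true false q).real {b} = if b then (q : ℝ) else 1 - q := by
  cases b <;> simp

lemma iIndepFun_coinMeasure (q : E → I) :
    iIndepFun (fun (e : E) (ω : E → Bool) => ω e) (coinMeasure q) :=
  iIndepFun_pi (X := fun _ => id) fun _ => aemeasurable_id

lemma coinMeasure_map_eval (q : E → I) (e : E) :
    (coinMeasure q).map (fun ω => ω e) = bernoulliMeasure true false (q e) :=
  (measurePreserving_eval _ e).map_eq

lemma coinMeasure_map_comp (q : E → I) {g : E' → E} (hg : Function.Injective g) :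
    (coinMeasure q).map (fun ω => ω ∘ g) = coinMeasure (q ∘ g) := by
  have := ((iIndepFun_coinMeasure q).precomp hg).map_fun_eq_pi_map
    fun e => (measurable_pi_apply (g e)).aemeasurable
  simp only [coinMeasure_map_eval] at this
  exact this

lemma coinMeasure_real_comp_mem (q : E → I) {g : E' → E} (hg : Function.Injective g)
    (A : Set (E' → Bool)) :
    (coinMeasure q).real {ω | ω ∘ g ∈ A} = (coinMeasure (q ∘ g)).real A := by
  rw [← coinMeasure_map_comp q hg, map_measureReal_apply (.of_discrete) (.of_discrete)]
  rfl

lemma coinMeasure_real_cylinder (q : E → I) (F : Finset E) (b : E → Bool) :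
    (coinMeasure q).real {ω | ∀ e ∈ F, ω e = b e} =
      ∏ e ∈ F, if b e then (q e : ℝ) else 1 - q e := by
  have hset : {ω : E → Bool | ∀ e ∈ F, ω e = b e} = ⋂ e ∈ F, (fun ω => ω e) ⁻¹' {b e} := by
    ext ω
    simp
  rw [hset, measureReal_def, (iIndepFun_coinMeasure q).measure_inter_preimage_eq_mul F
    fun _ _ => .of_discrete, ENNReal.toReal_prod]
  refine Finset.prod_congr rfl fun e _ => ?_
  rw [← Measure.map_apply (measurable_pi_apply e) .of_discrete, coinMeasure_map_eval]
  exact bernoulliMeasure_real_singleton_bool _ _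

lemma coinMeasure_real_singleton (q : E → I) (ω : E → Bool) :
    (coinMeasure q).real {ω} = ∏ e, if ω e then (q e : ℝ) else 1 - q e := by
  simpa [← funext_iff] using coinMeasure_real_cylinder q Finset.univ ω

lemma coinMeasure_real_inter_of_dependsOn (q : E → I) {F G : Finset E} (hFG : Disjoint F G)
    {A B : Set (E → Bool)} (hA : DependsOn (· ∈ A) (F : Set E))
    (hB : DependsOn (· ∈ B) (G : Set E)) :
    (coinMeasure q).real (A ∩ B) = (coinMeasure q).real A * (coinMeasure q).real B := by
  have hindep := ((iIndepFun_coinMeasure q).indepFun_finset F G hFG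
    measurable_pi_apply).measure_inter_preimage_eq_mul (F.restrict '' A) (G.restrict '' B)
    .of_discrete .of_discrete
  change coinMeasure q (F.restrict ⁻¹' _ ∩ G.restrict ⁻¹' _) =
    coinMeasure q (F.restrict ⁻¹' _) * coinMeasure q (G.restrict ⁻¹' _) at hindep
  rw [preimage_restrict_image_of_dependsOn hA, preimage_restrict_image_of_dependsOn hB] at hindep
  simp only [measureReal_def, hindep, ENNReal.toReal_mul]

lemma coinMeasure_real_forall_of_dependsOn (q : E → I) {α : Type*} {s : Finset α}
    {F : α → Finset E} (hF : (s : Set α).PairwiseDisjoint F) {A : α → Set (E → Bool)}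
    (hA : ∀ a ∈ s, DependsOn (· ∈ A a) (F a : Set E)) :
    (coinMeasure q).real {ω | ∀ a ∈ s, ω ∈ A a} = ∏ a ∈ s, (coinMeasure q).real (A a) := by
  classical
  induction s using Finset.induction_on with
  | empty => simp
  | insert a s ha ih =>
    rw [Finset.coe_insert, Set.pairwiseDisjoint_insert_of_notMem (by simpa using ha)] at hF
    rw [Finset.forall_mem_insert] at hA
    have hset : {ω : E → Bool | ∀ b ∈ insert a s, ω ∈ A b} = A a ∩ {ω | ∀ b ∈ s, ω ∈ A b} := by
      ext ω
      simp
    have hdep : DependsOn (· ∈ {ω : E → Bool | ∀ b ∈ s, ω ∈ A b}) (s.biUnion F : Set E) := by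
      refine fun ω η h => propext (forall₂_congr fun b hb => ?_)
      exact (hA.2 b hb fun e he => h e (by simpa using ⟨b, hb, he⟩)).to_iff
    have hdisj : Disjoint (F a) (s.biUnion F) :=
      (Finset.disjoint_biUnion_right _ _ _).2 fun b hb => hF.2 b hb
    rw [Finset.prod_insert ha, ← ih hF.1 hA.2, hset,
      coinMeasure_real_inter_of_dependsOn q hdisj hA.1 hdep]

lemma coinMeasure_real_forall_exists_ne_le (q : E → I) {α : Type*} {s : Finset α}
    {F : α → Finset E} (hF : (s : Set α).PairwiseDisjoint F) (b : α → E → Bool) {δ : ℝ}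
    (hδ : ∀ a ∈ s, δ ≤ ∏ e ∈ F a, if b a e then (q e : ℝ) else 1 - q e) :
    (coinMeasure q).real {ω | ∀ a ∈ s, ∃ e ∈ F a, ω e ≠ b a e} ≤ (1 - δ) ^ s.card := by
  set A : α → Set (E → Bool) := fun a => {ω | ∀ e ∈ F a, ω e = b a e}ᶜ with hA
  have hset : {ω : E → Bool | ∀ a ∈ s, ∃ e ∈ F a, ω e ≠ b a e} = {ω | ∀ a ∈ s, ω ∈ A a} := by
    simp [hA]
  have hdep a : DependsOn (· ∈ A a) (F a : Set E) := by
    refine fun ω η h => propext (not_congr (forall₂_congr fun e he => ?_))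
    rw [h e he]
  rw [hset, coinMeasure_real_forall_of_dependsOn q hF fun a _ => hdep a]
  refine (Finset.prod_le_prod (fun _ _ => measureReal_nonneg) fun a ha => ?_).trans_eq
    (Finset.prod_const _)
  rw [measureReal_compl .of_discrete, probReal_univ, coinMeasure_real_cylinder]
  exact sub_le_sub_left (hδ a ha) 1

end Coins

/-! ### Edges and their lengths -/

section Edges

open MeasureTheory unitInterval

variable {m n : ℕ}

/-- The potential edge between two distinct vertices. -/
def edgeOf (x y : Fin n) (h : x ≠ y) : EdgeIdx n :=
  ⟨(min x y, max x y), min_lt_max.2 h⟩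

lemma edgeOf_comm {x y : Fin n} (h : x ≠ y) : edgeOf x y h = edgeOf y x h.symm := by
  simp only [edgeOf, min_comm, max_comm]

lemma edgeOf_endpoints (e : EdgeIdx n) : edgeOf e.1.1 e.1.2 e.2.ne = e := by
  simp only [edgeOf, min_eq_left e.2.le, max_eq_right e.2.le]

lemma left_eq_endpoint_edgeOf {x y : Fin n} (h : x ≠ y) :
    x = (edgeOf x y h).1.1 ∨ x = (edgeOf x y h).1.2 := by
  rcases le_total x y with hxy | hxy <;> simp [edgeOf, hxy]

lemma right_eq_endpoint_edgeOf {x y : Fin n} (h : x ≠ y) :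
    y = (edgeOf x y h).1.1 ∨ y = (edgeOf x y h).1.2 :=
  edgeOf_comm h ▸ left_eq_endpoint_edgeOf h.symm

lemma endpoint_edgeOf_mem_of_left_mem {V : Finset (Fin n)} {x y : Fin n} (h : x ≠ y) (hx : x ∈ V) :
    (edgeOf x y h).1.1 ∈ V ∨ (edgeOf x y h).1.2 ∈ V := by
  rcases left_eq_endpoint_edgeOf h with hfst | hsnd
  · exact Or.inl (hfst ▸ hx)
  · exact Or.inr (hsnd ▸ hx)

lemma sampleAdj_iff {ω : Sample n} {x y : Fin n} :
    sampleAdj ω x y ↔ ∃ h : x ≠ y, ω (edgeOf x y h) = true := by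
  constructor
  · rintro ⟨e, he, ⟨hx, hy⟩ | ⟨hy, hx⟩⟩ <;> obtain rfl := Fin.ext hx <;> obtain rfl := Fin.ext hy
    · exact ⟨e.2.ne, by rwa [edgeOf_endpoints]⟩
    · exact ⟨e.2.ne', by rwa [edgeOf_comm, edgeOf_endpoints]⟩
  · rintro ⟨h, he⟩
    refine ⟨_, he, ?_⟩
    rcases le_total x y with hxy | hxy <;> simp [edgeOf, hxy]

lemma sampleAdj_comm {ω : Sample n} {x y : Fin n} : sampleAdj ω x y ↔ sampleAdj ω y x := by
  simp only [sampleAdj_iff, ne_comm (a := x), edgeOf_comm (x := x)]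

/-- The length of a potential edge: the distance between its endpoints. -/
def edgeLength (e : EdgeIdx n) : ℕ := e.1.2.val - e.1.1.val

lemma edgeLength_edgeOf {x y : Fin n} (h : x ≠ y) : edgeLength (edgeOf x y h) = Nat.dist x y := by
  rcases le_total x y with hxy | hxy
  · simp [edgeLength, edgeOf, hxy, Nat.dist_eq_sub_of_le]
  · simp [edgeLength, edgeOf, hxy, Nat.dist_eq_sub_of_le_right]

/-- The map on potential edges induced by an injection of the vertices. -/
def mapEdge (f : Fin m ↪ Fin n) (e : EdgeIdx m) : EdgeIdx n :=
  edgeOf (f e.1.1) (f e.1.2) (f.injective.ne e.2.ne)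

lemma mapEdge_edgeOf (f : Fin m ↪ Fin n) {x y : Fin m} (h : x ≠ y) :
    mapEdge f (edgeOf x y h) = edgeOf (f x) (f y) (f.injective.ne h) := by
  rcases le_total x y with hxy | hxy
  · simp only [mapEdge, edgeOf, min_eq_left hxy, max_eq_right hxy]
  · rw [edgeOf_comm (x := f x)]
    simp only [mapEdge, edgeOf, min_eq_right hxy, max_eq_left hxy]

lemma mapEdge_injective (f : Fin m ↪ Fin n) : Function.Injective (mapEdge f) := by
  intro e e' h
  simp only [mapEdge, edgeOf, Subtype.mk.injEq, Prod.mk.injEq] at h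
  have hunordered : (e.1.1 = e'.1.1 ∧ e.1.2 = e'.1.2) ∨ (e.1.1 = e'.1.2 ∧ e.1.2 = e'.1.1) := by
    simp only [← f.injective.eq_iff]
    grind
  rcases hunordered with ⟨h₁, h₂⟩ | ⟨h₁, h₂⟩
  · exact Subtype.ext (Prod.ext h₁ h₂)
  · exact absurd e.2 (h₁ ▸ h₂ ▸ e'.2.asymm)

lemma fst_mapEdge_mem_range (f : Fin m ↪ Fin n) (e : EdgeIdx m) :
    (mapEdge f e).1.1 ∈ Set.range f :=
  (min_choice (f e.1.1) (f e.1.2)).elim (fun h => ⟨_, h.symm⟩) fun h => ⟨_, h.symm⟩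

lemma snd_mapEdge_mem_range (f : Fin m ↪ Fin n) (e : EdgeIdx m) :
    (mapEdge f e).1.2 ∈ Set.range f :=
  (max_choice (f e.1.1) (f e.1.2)).elim (fun h => ⟨_, h.symm⟩) fun h => ⟨_, h.symm⟩

lemma sampleAdj_comp_mapEdge (f : Fin m ↪ Fin n) (ω : Sample n) (x y : Fin m) :
    sampleAdj (ω ∘ mapEdge f) x y ↔ sampleAdj ω (f x) (f y) := by
  simp only [sampleAdj_iff, Function.comp_apply, mapEdge_edgeOf, f.injective.ne_iff]

lemma edgeLength_mapEdge {f : Fin m ↪ Fin n} (hf : ∀ x y, Nat.dist (f x) (f y) = Nat.dist x y)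
    (e : EdgeIdx m) : edgeLength (mapEdge f e) = edgeLength e := by
  rw [mapEdge, edgeLength_edgeOf, hf, ← edgeLength_edgeOf e.2.ne, edgeOf_endpoints]

lemma sum_edgeLength_le {V : Finset (Fin n)} {F : Finset (EdgeIdx n)}
    (hFV : ∀ e ∈ F, e.1.1 ∈ V ∨ e.1.2 ∈ V) {D : ℕ} (hFD : ∀ e ∈ F, D ≤ edgeLength e) {f : ℕ → ℝ}
    {B : ℝ} (hB : ∀ s : Finset ℕ, (∀ d ∈ s, D ≤ d) → ∑ d ∈ s, f d ≤ B) :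
    ∑ e ∈ F, f (edgeLength e) ≤ 2 * V.card * B := by
  set side : EdgeIdx n → Fin n × Bool :=
    fun e => if e.1.1 ∈ V then (e.1.1, true) else (e.1.2, false) with hside
  have hmaps : ∀ e ∈ F, side e ∈ V ×ˢ (Finset.univ : Finset Bool) := by
    intro e he
    have := hFV e he
    by_cases h : e.1.1 ∈ V <;> simp_all
  have hinj (vb : Fin n × Bool) :
      Set.InjOn edgeLength (F.filter (side · = vb) : Set (EdgeIdx n)) := by
    intro e he e' he' h
    have he₂ : e.1.1.val < e.1.2.val := e.2
    have he₂' : e'.1.1.val < e'.1.2.val := e'.2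
    simp only [edgeLength] at h
    simp only [hside, Finset.coe_filter] at he he'
    refine Subtype.ext (Prod.ext (Fin.ext ?_) (Fin.ext ?_)) <;> grind
  have hfiber : ∀ vb ∈ V ×ˢ (Finset.univ : Finset Bool),
      ∑ e ∈ F.filter (side · = vb), f (edgeLength e) ≤ B := by
    intro vb _
    rw [← Finset.sum_image (hinj vb)]
    exact hB _ (Finset.forall_mem_image.2 fun e he => hFD e (Finset.mem_filter.1 he).1)
  calc ∑ e ∈ F, f (edgeLength e)
      = ∑ vb ∈ V ×ˢ Finset.univ, ∑ e ∈ F.filter (side · = vb), f (edgeLength e) :=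
        (Finset.sum_fiberwise_of_maps_to hmaps _).symm
    _ ≤ (V ×ˢ (Finset.univ : Finset Bool)).card • B := Finset.sum_le_card_nsmul _ _ _ hfiber
    _ = 2 * V.card * B := by simp [mul_comm]

end Edges

/-! ### The random graph -/

section RandomGraph

open MeasureTheory unitInterval

variable {m n : ℕ} {p : ℕ → I}

lemma summable_of_le_prod_one_sub {p : ℕ → ℝ} (hp₀ : ∀ i, 0 ≤ p i) (hp₁ : ∀ i, p i ≤ 1) {c : ℝ}
    (hc : 0 < c) (hprod : ∀ n, c ≤ ∏ i ∈ Finset.Icc 1 n, (1 - p i)) : Summable p := by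
  rw [← summable_nat_add_iff 1]
  refine summable_of_sum_range_le (c := - Real.log c) (fun i => hp₀ _) fun n => ?_
  have hexp : ∏ i ∈ Finset.range n, (1 - p (i + 1)) ≤
      Real.exp (- ∑ i ∈ Finset.range n, p (i + 1)) := by
    rw [← Finset.sum_neg_distrib, Real.exp_sum]
    exact Finset.prod_le_prod (fun i _ => sub_nonneg.2 (hp₁ _))
      fun i _ => Real.one_sub_le_exp_neg _
  have hcn := hprod n
  rw [← Finset.Ico_add_one_right_eq_Icc, Finset.prod_Ico_eq_prod_range] at hcn
  simp only [add_tsub_cancel_right, add_comm 1] at hcn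
  linarith [(Real.log_le_iff_le_exp hc).2 (hcn.trans hexp)]

/-- The law of the random graph on `n` vertices in which a pair at distance `d` is an edge with
probability `p d`. -/
noncomputable abbrev graphMeasure (p : ℕ → I) (n : ℕ) : Measure (Sample n) :=
  coinMeasure fun e => p (edgeLength e)

lemma pr_eq_graphMeasure_real (p : ℕ → I) (P : Sample n → Prop) :
    Pr (fun i => p i) n P = (graphMeasure p n).real {ω | P ω} := by
  classical
  rw [Pr, ← Finset.sum_filter, ← Set.coe_toFinset {ω | P ω}, ← sum_measureReal_singleton]
  refine Finset.sum_congr (by ext; simp) fun ω _ => ?_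
  rw [coinMeasure_real_singleton]
  rfl

/-- Some edge of length at least `D` has an endpoint in `V`. -/
def HasLongEdge (V : Finset (Fin n)) (D : ℕ) (ω : Sample n) : Prop :=
  ∃ e : EdgeIdx n, (e.1.1 ∈ V ∨ e.1.2 ∈ V) ∧ D ≤ edgeLength e ∧ ω e = true

lemma HasLongEdge.mono {V W : Finset (Fin n)} (hVW : V ⊆ W) {D : ℕ} {ω : Sample n}
    (h : HasLongEdge V D ω) : HasLongEdge W D ω :=
  h.imp fun _ he => ⟨he.1.imp (hVW ·) (hVW ·), he.2⟩

lemma dist_lt_of_sampleAdj {V : Finset (Fin n)} {D : ℕ} {ω : Sample n} (hlong : ¬ HasLongEdge V D ω)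
    {x y : Fin n} (hx : x ∈ V) (hxy : sampleAdj ω x y) : Nat.dist x y < D := by
  obtain ⟨hne, he⟩ := sampleAdj_iff.1 hxy
  rw [← edgeLength_edgeOf hne]
  exact not_le.1 fun hle => hlong ⟨_, endpoint_edgeOf_mem_of_left_mem hne hx, hle, he⟩

lemma measure_hasLongEdge_le (p : ℕ → I) (V : Finset (Fin n)) {D : ℕ} {B : ℝ}
    (hB : ∀ s : Finset ℕ, (∀ d ∈ s, D ≤ d) → ∑ d ∈ s, (p d : ℝ) ≤ B) :
    (graphMeasure p n).real {ω | HasLongEdge V D ω} ≤ 2 * V.card * B := by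
  classical
  set F : Finset (EdgeIdx n) := {e | (e.1.1 ∈ V ∨ e.1.2 ∈ V) ∧ D ≤ edgeLength e} with hF
  have hone (e : EdgeIdx n) : (graphMeasure p n).real {ω | ω e = true} = p (edgeLength e) := by
    simpa using coinMeasure_real_cylinder (fun e => p (edgeLength e)) {e} fun _ => true
  have hunion : {ω : Sample n | HasLongEdge V D ω} = ⋃ e ∈ F, {ω | ω e = true} := by
    ext ω
    simp [HasLongEdge, hF, and_assoc]
  calc (graphMeasure p n).real {ω | HasLongEdge V D ω}
      ≤ ∑ e ∈ F, (graphMeasure p n).real {ω | ω e = true} :=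
        hunion ▸ measureReal_biUnion_finset_le _ _
    _ = ∑ e ∈ F, (p (edgeLength e) : ℝ) := Finset.sum_congr rfl fun e _ => hone e
    _ ≤ 2 * V.card * B := sum_edgeLength_le (fun e he => (Finset.mem_filter.1 he).2.1)
        (fun e he => (Finset.mem_filter.1 he).2.2) hB

lemma eventually_measure_hasLongEdge_le (hp : Summable fun i => (p i : ℝ)) (m : ℕ) {ε : ℝ}
    (hε : 0 < ε) : ∀ᶠ D in atTop, ∀ n (V : Finset (Fin n)), V.card ≤ m →
      (graphMeasure p n).real {ω | HasLongEdge V D ω} ≤ ε := by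
  obtain ⟨s₀, hs₀⟩ := summable_iff_vanishing_norm.1 hp (ε / (2 * m + 1)) (by positivity)
  filter_upwards [eventually_gt_atTop (s₀.sup id)] with D hD n V hV
  have htail (s : Finset ℕ) (hs : ∀ d ∈ s, D ≤ d) : ∑ d ∈ s, (p d : ℝ) ≤ ε / (2 * m + 1) := by
    have hdisj : Disjoint s s₀ := Finset.disjoint_left.2 fun d hd hd₀ =>
      ((hs d hd).trans (Finset.le_sup (f := id) hd₀)).not_gt hD
    exact (Real.le_norm_self _).trans (hs₀ s hdisj).le
  have hVm : (V.card : ℝ) ≤ m := by exact_mod_cast hV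
  calc (graphMeasure p n).real {ω | HasLongEdge V D ω}
      ≤ 2 * V.card * (ε / (2 * m + 1)) := measure_hasLongEdge_le p V htail
    _ ≤ (2 * m + 1) * (ε / (2 * m + 1)) := by
        gcongr
        linarith
    _ = ε := by field_simp

lemma exists_le_prod_one_sub (hp : Summable fun i => (p i : ℝ)) (hp₁ : ∀ i, (p i : ℝ) < 1) (m : ℕ) :
    ∃ δ > 0, ∀ n (V : Finset (Fin n)) (F : Finset (EdgeIdx n)), V.card ≤ m →
      (∀ e ∈ F, e.1.1 ∈ V ∨ e.1.2 ∈ V) → δ ≤ ∏ e ∈ F, (1 - (p (edgeLength e) : ℝ)) := by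
  set f : ℕ → ℝ := fun i => - Real.log (1 - p i) with hf
  have hf₀ i : 0 ≤ f i := neg_nonneg.2 <|
    Real.log_nonpos (sub_nonneg.2 (hp₁ i).le) (sub_le_self _ (p i).2.1)
  have hsum : Summable f := by
    simpa [hf, sub_eq_add_neg] using
      (Real.summable_log_one_add_of_summable (by simpa using hp.neg)).neg
  refine ⟨Real.exp (-(2 * m * ∑' i, f i)), Real.exp_pos _, fun n V F hV hF => ?_⟩
  have hlog : ∑ e ∈ F, f (edgeLength e) ≤ 2 * m * ∑' i, f i := by
    refine (sum_edgeLength_le hF (D := 0) (by simp) fun s _ => hsum.sum_le_tsum s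
      fun i _ => hf₀ i).trans ?_
    gcongr
    exact tsum_nonneg hf₀
  calc Real.exp (-(2 * m * ∑' i, f i)) ≤ Real.exp (∑ e ∈ F, -f (edgeLength e)) := by
        rw [Finset.sum_neg_distrib]
        gcongr
    _ = ∏ e ∈ F, (1 - (p (edgeLength e) : ℝ)) := by
        rw [Real.exp_sum]
        refine Finset.prod_congr rfl fun e _ => ?_
        rw [hf, neg_neg, Real.exp_log (sub_pos.2 (hp₁ _))]

end RandomGraph

/-! ### Isolated copies -/

section IsolatedCopies

open MeasureTheory unitInterval

variable {h n c D : ℕ} {p : ℕ → I}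

/-- The translation by `c`, from `h` vertices into `n` vertices. -/
def shift (hc : c + h ≤ n) : Fin h ↪ Fin n where
  toFun x := ⟨c + x, by omega⟩
  inj' x y hxy := by simpa [Fin.ext_iff] using hxy

lemma shift_val (hc : c + h ≤ n) (x : Fin h) : (shift hc x : ℕ) = c + x := rfl

/-- The interval `[c, c + h)` of vertices. -/
def block (hc : c + h ≤ n) : Finset (Fin n) := Finset.univ.map (shift hc)

lemma mem_block {hc : c + h ≤ n} {v : Fin n} : v ∈ block hc ↔ c ≤ v ∧ v < c + h := by
  simp only [block, Finset.mem_map, Finset.mem_univ, true_and, Fin.ext_iff, shift_val]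
  exact ⟨by rintro ⟨x, hx⟩; omega, fun hv => ⟨⟨v - c, by omega⟩, by simp only; omega⟩⟩

lemma mem_range_shift {hc : c + h ≤ n} {v : Fin n} : v ∈ Set.range (shift hc) ↔ v ∈ block hc := by
  simp [block]

lemma card_block (hc : c + h ≤ n) : (block hc).card = h := by
  simp [block]

lemma dist_shift (hc : c + h ≤ n) (x y : Fin h) :
    Nat.dist (shift hc x) (shift hc y) = Nat.dist x y :=
  Nat.dist_add_add_left c x y

/-- In the outcome `ω` the interval `[c, c + h)` carries the graph `η`, and no edge leaves it. -/
def IsIsolatedCopy (hc : c + h ≤ n) (η : Sample h) (ω : Sample n) : Prop :=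
  ω ∘ mapEdge (shift hc) = η ∧ ∀ x y, sampleAdj ω (shift hc x) y → y ∈ Set.range (shift hc)

/-- The potential edges of length less than `D` that touch the interval `[c, c + h)`. -/
def slotEdges (D : ℕ) (hc : c + h ≤ n) : Finset (EdgeIdx n) :=
  {e | (e.1.1 ∈ block hc ∨ e.1.2 ∈ block hc) ∧ edgeLength e < D}

/-- The graph with a copy of `η` on the interval `[c, c + h)` and no other edges. -/
noncomputable def pattern (hc : c + h ≤ n) (η : Sample h) : Sample n :=
  Function.extend (mapEdge (shift hc)) η fun _ => false

lemma mapEdge_shift_mem_slotEdges (hc : c + h ≤ n) (hD : h ≤ D) (e : EdgeIdx h) :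
    mapEdge (shift hc) e ∈ slotEdges D hc := by
  have hlen : edgeLength e < D := by
    simp only [edgeLength]
    omega
  have hmem : (mapEdge (shift hc) e).1.1 ∈ block hc :=
    mem_range_shift.1 (fst_mapEdge_mem_range _ _)
  simpa [slotEdges, edgeLength_mapEdge (dist_shift hc), hlen] using Or.inl hmem

lemma isIsolatedCopy_of_eqOn_slotEdges {hc : c + h ≤ n} (hD : h ≤ D) {η : Sample h} {ω : Sample n}
    (hω : ∀ e ∈ slotEdges D hc, ω e = pattern hc η e) (hlong : ¬ HasLongEdge (block hc) D ω) :
    IsIsolatedCopy hc η ω := by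
  refine ⟨funext fun e => ?_, fun x y hxy => ?_⟩
  · rw [Function.comp_apply, hω _ (mapEdge_shift_mem_slotEdges hc hD e), pattern,
      (mapEdge_injective _).extend_apply]
  · obtain ⟨hne, he⟩ := sampleAdj_iff.1 hxy
    have hx : shift hc x ∈ block hc := mem_range_shift.1 ⟨x, rfl⟩
    have htouch := endpoint_edgeOf_mem_of_left_mem hne hx
    have hshort : edgeLength (edgeOf _ y hne) < D :=
      edgeLength_edgeOf hne ▸ dist_lt_of_sampleAdj hlong hx hxy
    have hrange : ∃ e, mapEdge (shift hc) e = edgeOf _ y hne := by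
      by_contra hnot
      rw [hω _ (by simp [slotEdges, htouch, hshort]), pattern,
        Function.extend_apply' _ _ _ hnot] at he
      exact Bool.false_ne_true he
    obtain ⟨e, he'⟩ := hrange
    rcases right_eq_endpoint_edgeOf hne with hy | hy <;> rw [hy, ← he']
    · exact fst_mapEdge_mem_range _ _
    · exact snd_mapEdge_mem_range _ _

lemma disjoint_slotEdges {c' : ℕ} {hc : c + h ≤ n} {hc' : c' + h ≤ n} (hcc' : c + h + D ≤ c') :
    Disjoint (slotEdges D hc) (slotEdges D hc') := by
  refine Finset.disjoint_left.2 fun e he he' => ?_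
  have := e.2
  simp only [slotEdges, Finset.mem_filter, Finset.mem_univ, true_and, mem_block, edgeLength]
    at he he'
  omega

lemma exists_le_prod_slotEdges (hp : Summable fun i => (p i : ℝ)) (hp₁ : ∀ i, (p i : ℝ) < 1)
    {η : Sample h} (hη : (graphMeasure p h).real {η} ≠ 0) :
    ∃ δ > 0, ∀ D ≥ h, ∀ n c (hc : c + h ≤ n), δ ≤ ∏ e ∈ slotEdges D hc,
      if pattern hc η e then (p (edgeLength e) : ℝ) else 1 - p (edgeLength e) := by
  classical
  obtain ⟨δ, hδ, hδle⟩ := exists_le_prod_one_sub hp hp₁ h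
  have hη : 0 < (graphMeasure p h).real {η} := measureReal_nonneg.lt_of_ne' hη
  refine ⟨δ * (graphMeasure p h).real {η}, mul_pos hδ hη, fun D hD n c hc => ?_⟩
  set inner := Finset.univ.image (mapEdge (shift hc)) with hinner
  have hsub : inner ⊆ slotEdges D hc :=
    Finset.image_subset_iff.2 fun e _ => mapEdge_shift_mem_slotEdges hc hD e
  have hpattern_inner : ∏ e ∈ inner, (if pattern hc η e then (p (edgeLength e) : ℝ)
      else 1 - p (edgeLength e)) = (graphMeasure p h).real {η} := by
    rw [coinMeasure_real_singleton, hinner, Finset.prod_image (mapEdge_injective _).injOn]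
    simp only [pattern, (mapEdge_injective _).extend_apply, edgeLength_mapEdge (dist_shift hc)]
  have hpattern_outer : ∀ e ∈ slotEdges D hc \ inner, pattern hc η e = false := fun e he =>
    Function.extend_apply' _ _ _ fun hrange =>
      (Finset.mem_sdiff.1 he).2 (by simpa [hinner] using hrange)
  rw [← Finset.prod_sdiff hsub, hpattern_inner]
  gcongr
  rw [Finset.prod_congr rfl fun e he => if_neg (by simp [hpattern_outer e he])]
  exact hδle n (block hc) _ (card_block hc).le fun e he => by
    simpa [slotEdges] using (Finset.mem_filter.1 (Finset.mem_sdiff.1 he).1).2.1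

/-- Some interval inside `[a, a + W)` carries an isolated copy of `η`. -/
def HasCopyIn (η : Sample h) (a W : ℕ) (ω : Sample n) : Prop :=
  ∃ c, ∃ hc : c + h ≤ n, a ≤ c ∧ c + h ≤ a + W ∧ IsIsolatedCopy hc η ω

lemma measure_not_hasCopyIn_le {η : Sample h} {δ : ℝ} (hD : h ≤ D)
    (hδ : ∀ c (hc : c + h ≤ n), δ ≤ ∏ e ∈ slotEdges D hc,
      if pattern hc η e then (p (edgeLength e) : ℝ) else 1 - p (edgeLength e))
    {ε : ℝ} {M : ℕ} (hlong : ∀ V : Finset (Fin n), V.card ≤ M * h →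
      (graphMeasure p n).real {ω | HasLongEdge V D ω} ≤ ε)
    {a : ℕ} (ha : a + M * (h + D) ≤ n) :
    (graphMeasure p n).real {ω | ¬ HasCopyIn η a (M * (h + D)) ω} ≤ ε + (1 - δ) ^ M := by
  classical
  have hslot (i : Fin M) : a + i * (h + D) + h ≤ a + M * (h + D) := by
    have : (i + 1 : ℕ) * (h + D) ≤ M * (h + D) := Nat.mul_le_mul_right _ i.2
    linarith
  have hc (i : Fin M) : a + i * (h + D) + h ≤ n := (hslot i).trans ha
  have hdisj : Set.PairwiseDisjoint (Finset.univ : Finset (Fin M))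
      fun i => slotEdges D (hc i) := by
    have hlt {i j : Fin M} (hij : i < j) :
        Disjoint (slotEdges D (hc i)) (slotEdges D (hc j)) := by
      have : (i + 1 : ℕ) * (h + D) ≤ j * (h + D) := Nat.mul_le_mul_right _ hij
      exact disjoint_slotEdges (by linarith)
    exact fun i _ j _ hij => hij.lt_or_gt.elim hlt fun hji => (hlt hji).symm
  set V := Finset.univ.biUnion fun i => block (hc i)
  have hsub : {ω | ¬ HasCopyIn η a (M * (h + D)) ω} ⊆ {ω | HasLongEdge V D ω} ∪
      {ω | ∀ i ∈ Finset.univ, ∃ e ∈ slotEdges D (hc i), ω e ≠ pattern (hc i) η e} := by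
    intro ω hω
    by_contra hnot
    simp only [Set.mem_union, Set.mem_ofPred_eq, not_or, not_forall, not_exists, not_and,
      not_not] at hnot
    obtain ⟨hnolong, i, -, hi⟩ := hnot
    refine hω ⟨_, hc i, by simp, hslot i, isIsolatedCopy_of_eqOn_slotEdges hD hi ?_⟩
    exact fun hl => hnolong <| hl.mono <|
      Finset.subset_biUnion_of_mem (fun i => block (hc i)) (Finset.mem_univ i)
  have hcard : V.card ≤ M * h := by
    simpa [card_block] using Finset.card_biUnion_le (s := Finset.univ) (t := fun i => block (hc i))
  have hpow := coinMeasure_real_forall_exists_ne_le (fun e => p (edgeLength e)) hdisj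
    (fun i => pattern (hc i) η) fun i _ => hδ _ (hc i)
  rw [Finset.card_univ, Fintype.card_fin] at hpow
  exact (measureReal_mono hsub).trans
    ((measureReal_union_le _ _).trans (add_le_add (hlong V hcard) hpow))

theorem exists_measure_not_hasCopyIn_le (hp : Summable fun i => (p i : ℝ))
    (hp₁ : ∀ i, (p i : ℝ) < 1) {η : Sample h} (hη : (graphMeasure p h).real {η} ≠ 0) {ε : ℝ}
    (hε : 0 < ε) : ∃ W, ∀ n a, a + W ≤ n →
      (graphMeasure p n).real {ω | ¬ HasCopyIn η a W ω} ≤ ε := by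
  obtain ⟨δ, hδ, hδle⟩ := exists_le_prod_slotEdges hp hp₁ hη
  obtain ⟨M, hM⟩ := exists_pow_lt_of_lt_one (half_pos hε) (sub_lt_self 1 (lt_min hδ one_pos))
  obtain ⟨D, hD, hlong⟩ := ((eventually_ge_atTop h).and
    (eventually_measure_hasLongEdge_le hp (M * h) (half_pos hε))).exists
  refine ⟨M * (h + D), fun n a ha => ?_⟩
  have := measure_not_hasCopyIn_le hD (fun c hc => (min_le_left δ 1).trans (hδle D hD n c hc))
    (hlong n) ha
  linarith

end IsolatedCopies

/-! ### Outcomes as relational structures -/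

section SampleRel

variable {h n c : ℕ}

/-- The relations of `L₊`, adjacency and successor, in the outcome `ω`. -/
def sampleRel (ω : Sample n) : plusRel 2 → Fin n → Fin n → Prop
  | .adj => sampleAdj ω
  | .succ => fun x y => x.val = y.val + 1

instance : Finite (plusRel 2) :=
  Finite.of_surjective (fun b : Bool => if b then plusRel.adj else plusRel.succ) fun
    | .adj => ⟨true, rfl⟩
    | .succ => ⟨false, rfl⟩

lemma isBinary_Lplus : IsBinary Lplus where
  isEmpty_functions n hn := ⟨fun f => by cases f <;> exact hn rfl⟩
  isEmpty_relations n hn := ⟨fun r => by cases r <;> exact hn rfl⟩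

lemma binaryRel_plusStructure {m : ℕ} (ω : Sample (m + 1)) :
    @binaryRel Lplus (Fin (m + 1)) (plusStructure ω) = sampleRel ω := by
  funext r x y
  cases r <;> rfl

lemma near_one_sampleRel_iff {ω : Sample n} {x y : Fin n} :
    Near (sampleRel ω) 1 x y ↔ Nat.dist x y ≤ 1 ∨ sampleAdj ω x y := by
  have hrel (x y : Fin n) :
      (∃ r, sampleRel ω r x y) ↔ sampleAdj ω x y ∨ x.val = y.val + 1 :=
    ⟨by rintro ⟨_ | _, h⟩ <;> [exact Or.inl h; exact Or.inr h],
      fun h => h.elim (fun h => ⟨.adj, h⟩) fun h => ⟨.succ, h⟩⟩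
  rw [near_one_iff, gaifman, SimpleGraph.fromRel_adj, hrel, hrel, sampleAdj_comm (x := y)]
  have hdist : Nat.dist x y ≤ 1 ↔ x = y ∨ x.val = y.val + 1 ∨ y.val = x.val + 1 := by
    rw [Nat.dist, Fin.ext_iff]
    omega
  rw [hdist]
  tauto

lemma sampleRel_shift_iff {hc : c + h ≤ n} {ω : Sample n} (r : plusRel 2) (x y : Fin h) :
    sampleRel ω r (shift hc x) (shift hc y) ↔ sampleRel (ω ∘ mapEdge (shift hc)) r x y := by
  cases r with
  | adj => exact (sampleAdj_comp_mapEdge _ _ _ _).symm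
  | succ =>
    simp only [sampleRel, shift_val]
    omega

end SampleRel

/-! ### Interior types are ubiquitous -/

section InteriorTypes

open MeasureTheory unitInterval

variable {h n c d j k K : ℕ} {p : ℕ → I} {η : Sample h} {ω : Sample n}

/-- `t` is the type of a point of some outcome of positive probability whose ball of radius `2 ^ j`
avoids the first and the last vertex. -/
def IsInteriorType (p : ℕ → I) (t : LocalType (plusRel 2) j 1) : Prop :=
  ∃ (h : ℕ) (η : Sample h), (graphMeasure p h).real {η} ≠ 0 ∧
    ∃ x, (∀ y, Near (sampleRel η) (2 ^ j) x y → 0 < y.val ∧ y.val + 1 < h) ∧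
      localType (sampleRel η) j ![x] = t

/-- Every set of at most `K` vertices is far from some vertex of type `t`. -/
def IsUbiquitous (K : ℕ) (t : LocalType (plusRel 2) j 1) (ω : Sample n) : Prop :=
  ∀ s : Finset (Fin n), s.card ≤ K →
    ∃ y, localType (sampleRel ω) j ![y] = t ∧ ∀ z ∈ s, ¬ Near (sampleRel ω) (2 ^ j) z y

/-- All interior types of depth less than `k` are `K`-ubiquitous. -/
def IsRich (p : ℕ → I) (K k : ℕ) (ω : Sample n) : Prop :=
  ∀ j < k, ∀ t : LocalType (plusRel 2) j 1, IsInteriorType p t → IsUbiquitous K t ω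

lemma IsIsolatedCopy.isInterior {hc : c + h ≤ n} (hω : IsIsolatedCopy hc η ω) {x : Fin h}
    (hx : ∀ y, Near (sampleRel η) d x y → 0 < y.val ∧ y.val + 1 < h) :
    IsInterior (sampleRel η) (sampleRel ω) (shift hc) d x := by
  intro x' hx' y hy
  rcases near_one_sampleRel_iff.1 hy with hdist | hadj
  · rw [mem_range_shift, mem_block]
    have := hx x' hx'
    rw [shift_val, Nat.dist] at hdist
    omega
  · exact hω.2 x' y hadj

lemma HasCopyIn.exists_localType_eq {a W : ℕ} (hω : HasCopyIn η a W ω) {x : Fin h}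
    (hx : ∀ y, Near (sampleRel η) (2 ^ j) x y → 0 < y.val ∧ y.val + 1 < h) :
    ∃ y, localType (sampleRel ω) j ![y] = localType (sampleRel η) j ![x] ∧
      ∀ z, Near (sampleRel ω) (2 ^ j) z y → a ≤ z ∧ z < a + W := by
  obtain ⟨c, hc, hac, hcW, hcopy⟩ := hω
  have hrel (r : plusRel 2) (x y : Fin h) :
      sampleRel ω r (shift hc x) (shift hc y) ↔ sampleRel η r x y := by
    rw [sampleRel_shift_iff, hcopy.1]
  have hins := hcopy.isInterior hx
  refine ⟨shift hc x, ?_, fun z hz => ?_⟩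
  · rw [localType_comp_of_isInterior hrel (shift hc).injective (w := ![x]) (by simpa using hins)]
    simp only [Matrix.vec_single_eq_const, Function.comp_def]
  · obtain ⟨z', rfl, -⟩ :=
      hins.exists_of_near_map hrel (shift hc).injective (Nat.le_succ _) hz.symm
    rw [shift_val]
    omega

lemma isUbiquitous_of_hasCopyIn {W : ℕ} (hω : ∀ i ≤ K, HasCopyIn η (i * W) W ω) {x : Fin h}
    (hx : ∀ y, Near (sampleRel η) (2 ^ j) x y → 0 < y.val ∧ y.val + 1 < h) :
    IsUbiquitous K (localType (sampleRel η) j ![x]) ω := by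
  classical
  intro s hs
  -- Each vertex of `s` lies in at most one of the `K + 1` windows, so `s` misses some window.
  obtain ⟨i, hi, his⟩ := Finset.exists_mem_notMem_of_card_lt_card
    (s := s.image fun z => z.val / W) (t := Finset.range (K + 1))
    (by simpa using Finset.card_image_le.trans_lt (Nat.lt_succ_of_le hs))
  obtain ⟨y, hy, hball⟩ :=
    (hω i (Nat.le_of_lt_succ (Finset.mem_range.1 hi))).exists_localType_eq hx
  refine ⟨y, hy, fun z hz hzy => his (Finset.mem_image.2 ⟨z, hz, ?_⟩)⟩
  exact Nat.div_eq_of_lt_le (hball z hzy).1 (by linarith [(hball z hzy).2])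

lemma tendsto_measure_not_isUbiquitous (hp : Summable fun i => (p i : ℝ))
    (hp₁ : ∀ i, (p i : ℝ) < 1) {t : LocalType (plusRel 2) j 1} (ht : IsInteriorType p t) (K : ℕ) :
    Tendsto (fun n => (graphMeasure p n).real {ω | ¬ IsUbiquitous K t ω}) atTop (nhds 0) := by
  obtain ⟨h, η, hη, x, hx, rfl⟩ := ht
  refine Metric.tendsto_nhds.2 fun ε hε => ?_
  obtain ⟨W, hW⟩ := exists_measure_not_hasCopyIn_le hp hp₁ hη
    (show 0 < ε / (K + 2) by positivity)
  filter_upwards [eventually_ge_atTop ((K + 1) * W)] with n hn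
  have hsub : {ω : Sample n | ¬ IsUbiquitous K (localType (sampleRel η) j ![x]) ω} ⊆
      ⋃ i ∈ Finset.range (K + 1), {ω | ¬ HasCopyIn η (i * W) W ω} := by
    intro ω hω
    by_contra hnot
    simp only [Set.mem_iUnion, Finset.mem_range, Nat.lt_succ_iff, Set.mem_ofPred_eq, not_exists,
      not_not] at hnot
    exact hω (isUbiquitous_of_hasCopyIn hnot hx)
  have hwindow : ∀ i ∈ Finset.range (K + 1),
      (graphMeasure p n).real {ω | ¬ HasCopyIn η (i * W) W ω} ≤ ε / (K + 2) := by
    intro i hi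
    have : (i + 1) * W ≤ (K + 1) * W := Nat.mul_le_mul_right _ (Finset.mem_range.1 hi)
    exact hW n (i * W) (by linarith)
  rw [Real.dist_eq, sub_zero, abs_of_nonneg measureReal_nonneg]
  calc (graphMeasure p n).real {ω | ¬ IsUbiquitous K (localType (sampleRel η) j ![x]) ω}
      ≤ ∑ i ∈ Finset.range (K + 1), (graphMeasure p n).real {ω | ¬ HasCopyIn η (i * W) W ω} :=
        (measureReal_mono hsub (measure_ne_top _ _)).trans (measureReal_biUnion_finset_le _ _)
    _ ≤ (K + 1) * (ε / (K + 2)) := by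
        simpa using Finset.sum_le_card_nsmul _ _ _ hwindow
    _ < (K + 2) * (ε / (K + 2)) := by
        gcongr
        norm_num
    _ = ε := by field_simp

theorem tendsto_measure_not_isRich (hp : Summable fun i => (p i : ℝ)) (hp₁ : ∀ i, (p i : ℝ) < 1)
    (K k : ℕ) :
    Tendsto (fun n => (graphMeasure p n).real {ω | ¬ IsRich p K k ω}) atTop (nhds 0) := by
  have : Fintype ((j : Fin k) × {t : LocalType (plusRel 2) j 1 // IsInteriorType p t}) :=
    Fintype.ofFinite _
  have hsum := tendsto_finsetSum Finset.univ fun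
      (jt : (j : Fin k) × {t : LocalType (plusRel 2) j 1 // IsInteriorType p t}) _ =>
    tendsto_measure_not_isUbiquitous hp hp₁ jt.2.2 K
  rw [Finset.sum_const_zero] at hsum
  refine squeeze_zero (fun _ => measureReal_nonneg) (fun n => ?_) hsum
  refine (measureReal_mono fun ω hω => ?_).trans (measureReal_iUnion_fintype_le _)
  simp only [IsRich, Set.mem_ofPred_eq, not_forall] at hω
  obtain ⟨j, hj, t, ht, hnot⟩ := hω
  exact Set.mem_iUnion.2 ⟨⟨⟨j, hj⟩, t, ht⟩, hnot⟩

lemma IsRich.farExtends {C : Type*} {m : ℕ} {ω' : Sample (m + 1)} {a : C → Fin (m + 1)}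
    (hω : IsRich p K k ω) (hω' : (graphMeasure p (m + 1)).real {ω'} ≠ 0)
    (hfirst : 0 ∈ Set.range a) (hlast : Fin.last m ∈ Set.range a) :
    FarExtends (sampleRel ω') (sampleRel ω) a K k := by
  obtain ⟨first, hfirst⟩ := hfirst
  obtain ⟨last, hlast⟩ := hlast
  refine fun j hj x hx => hω j hj _ ⟨m + 1, ω', hω', x, fun y hy => ?_, rfl⟩
  have hy₀ : y ≠ 0 := fun h => hx first (hfirst ▸ h ▸ hy.symm)
  have hyₗ : y ≠ Fin.last m := fun h => hx last (hlast ▸ h ▸ hy.symm)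
  rw [Ne, Fin.ext_iff] at hy₀ hyₗ
  simp only [Fin.val_zero, Fin.val_last] at hy₀ hyₗ
  omega

end InteriorTypes

/-! ### The two ends -/

section Ends

open MeasureTheory unitInterval

variable {m n d k L D : ℕ} {p : ℕ → I}

/-- The first `L` and the last `L` vertices. -/
def endZone (n L : ℕ) : Finset (Fin n) := {v | v.val < L ∨ n ≤ v.val + L}

lemma mem_endZone {v : Fin n} : v ∈ endZone n L ↔ v.val < L ∨ n ≤ v.val + L := by
  simp [endZone]

lemma card_endZone_le (n L : ℕ) : (endZone n L).card ≤ 2 * L := by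
  rw [← Finset.card_range (2 * L)]
  refine Finset.card_le_card_of_injOn (fun v => if v.val < L then v.val else v.val + 2 * L - n)
    (fun v hv => ?_) fun v hv w hw hvw => Fin.ext ?_
  · rw [Finset.mem_coe, mem_endZone] at hv
    simp only [Finset.coe_range, Set.mem_Iio]
    split_ifs <;> omega
  · rw [Finset.mem_coe, mem_endZone] at hv hw
    simp only at hvw
    split_ifs at hvw <;> omega

/-- The first and the last vertex. -/
def ends (m : ℕ) : Fin 2 → Fin (m + 1) := ![0, Fin.last m]

/-- The balls of radius `d` about the first and the last vertex stay among the first `L` and the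
last `L` vertices. -/
def EndBallsWithin (d L : ℕ) (ω : Sample (m + 1)) : Prop :=
  ∀ a v, Near (sampleRel ω) d (ends m a) v → v ∈ endZone (m + 1) L

lemma endBallsWithin_zero (ω : Sample (m + 1)) : EndBallsWithin 0 1 ω := by
  intro a v hv
  rw [near_zero_iff] at hv
  subst hv
  rw [mem_endZone]
  fin_cases a <;> simp [ends]

lemma EndBallsWithin.succ {ω : Sample (m + 1)} (h : EndBallsWithin d L ω)
    (hlong : ¬ HasLongEdge (endZone (m + 1) L) D ω) : EndBallsWithin (d + 1) (L + D + 1) ω := by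
  intro a v hv
  obtain ⟨z, hz, hzv⟩ := hv.exists_of_succ
  have hzL := h a z hz
  have hdist : Nat.dist z v ≤ D + 1 := by
    rcases near_one_sampleRel_iff.1 hzv with hdist | hadj
    · omega
    · exact (dist_lt_of_sampleAdj hlong hzL hadj).le.trans (Nat.le_succ D)
  rw [mem_endZone] at hzL ⊢
  rw [Nat.dist] at hdist
  omega

lemma exists_measure_not_endBallsWithin_le (hp : Summable fun i => (p i : ℝ)) (d : ℕ) {ε : ℝ}
    (hε : 0 < ε) :
    ∃ L, ∀ m, (graphMeasure p (m + 1)).real {ω | ¬ EndBallsWithin d (L + 1) ω} ≤ ε := by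
  induction d generalizing ε with
  | zero => exact ⟨0, fun m => by simp [endBallsWithin_zero, hε.le]⟩
  | succ d ih =>
    obtain ⟨L, hL⟩ := ih (half_pos hε)
    obtain ⟨D, hD⟩ := (eventually_measure_hasLongEdge_le hp (2 * (L + 1)) (half_pos hε)).exists
    refine ⟨L + 1 + D, fun m => ?_⟩
    have hsub : {ω : Sample (m + 1) | ¬ EndBallsWithin (d + 1) (L + 1 + D + 1) ω} ⊆
        {ω | ¬ EndBallsWithin d (L + 1) ω} ∪ {ω | HasLongEdge (endZone (m + 1) (L + 1)) D ω} := by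
      intro ω hω
      by_contra hnot
      rw [Set.mem_union, not_or] at hnot
      exact hω ((not_not.1 hnot.1).succ hnot.2)
    calc (graphMeasure p (m + 1)).real {ω | ¬ EndBallsWithin (d + 1) (L + 1 + D + 1) ω}
        ≤ ε / 2 + ε / 2 := (measureReal_mono hsub).trans ((measureReal_union_le _ _).trans
          (add_le_add (hL m) (hD _ _ (card_endZone_le _ _))))
      _ = ε := add_halves ε

/-- The `L` vertices at the left end (`b = false`) or at the right end (`b = true`). -/
def sideShift (hL : L ≤ n) (b : Bool) : Fin L ↪ Fin n :=
  shift (c := bif b then n - L else 0) (by cases b <;> simp <;> omega)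

/-- Two disjoint copies of `Fin L`, placed at the two ends of `Fin n`. -/
def endsMap (hL : L ≤ n) (u : Bool × Fin L) : Fin n := sideShift hL u.1 u.2

/-- The potential edges within one of the two copies of `Fin L`, placed at the ends of `Fin n`. -/
def endsEdge (hL : L ≤ n) (e : Bool × EdgeIdx L) : EdgeIdx n := mapEdge (sideShift hL e.1) e.2

lemma endsMap_val (hL : L ≤ n) (u : Bool × Fin L) :
    (endsMap hL u : ℕ) = (bif u.1 then n - L else 0) + u.2 :=
  rfl

lemma mem_range_endsMap {hL : L ≤ n} {v : Fin n} :
    v ∈ Set.range (endsMap hL) ↔ v ∈ endZone n L := by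
  simp only [mem_endZone, Set.mem_range, Prod.exists, Bool.exists_bool, Fin.ext_iff, endsMap_val,
    cond_true, cond_false]
  constructor
  · rintro (⟨x, hx⟩ | ⟨x, hx⟩) <;> omega
  · rintro (hv | hv)
    · exact Or.inl ⟨⟨v, hv⟩, Nat.zero_add _⟩
    · exact Or.inr ⟨⟨v - (n - L), by omega⟩, by simp only; omega⟩

lemma endsMap_injective (hL : 2 * L ≤ n) :
    Function.Injective (endsMap (by omega : L ≤ n)) := by
  rintro ⟨b, x⟩ ⟨b', x'⟩ h
  simp only [Fin.ext_iff, endsMap_val] at h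
  cases b <;> cases b' <;> simp only [cond_true, cond_false, Prod.mk.injEq, Fin.ext_iff, true_and,
    reduceCtorEq, false_and] at h ⊢ <;> omega

lemma endsEdge_injective (hL : 2 * L ≤ n) :
    Function.Injective (endsEdge (by omega : L ≤ n)) := by
  rintro ⟨b, e⟩ ⟨b', e'⟩ h
  obtain ⟨x, hx⟩ := fst_mapEdge_mem_range (sideShift (by omega : L ≤ n) b) e
  obtain ⟨x', hx'⟩ := fst_mapEdge_mem_range (sideShift (by omega : L ≤ n) b') e'
  have hside : (b, x) = (b', x') := endsMap_injective hL <|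
    hx.trans ((congrArg (·.1.1) h).trans hx'.symm)
  obtain rfl := congrArg Prod.fst hside
  exact congrArg _ (mapEdge_injective _ h)

lemma edgeLength_endsEdge (hL : L ≤ n) (e : Bool × EdgeIdx L) :
    edgeLength (endsEdge hL e) = edgeLength e.2 :=
  edgeLength_mapEdge (dist_shift _) e.2

/-- Adjacency and successor on the disjoint union of two copies of `Fin L`, each with its own coin
tosses. -/
def endsRel (τ : Bool × EdgeIdx L → Bool) (r : plusRel 2) (u v : Bool × Fin L) : Prop :=
  u.1 = v.1 ∧ sampleRel (fun e => τ (u.1, e)) r u.2 v.2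

lemma sampleRel_endsMap_iff (hn : 2 * L + D < n) {ω : Sample n}
    (hlong : ¬ HasLongEdge (endZone n L) D ω) (r : plusRel 2) (u v : Bool × Fin L) :
    sampleRel ω r (endsMap (by omega : L ≤ n) u) (endsMap (by omega) v) ↔
      endsRel (ω ∘ endsEdge (by omega)) r u v := by
  by_cases huv : u.1 = v.1
  · obtain ⟨b, x⟩ := u
    obtain ⟨b', y⟩ := v
    obtain rfl : b = b' := huv
    exact (sampleRel_shift_iff r x y).trans (and_iff_right rfl).symm
  · have hdist : D + 1 < Nat.dist (endsMap (by omega : L ≤ n) u)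
        (endsMap (by omega : L ≤ n) v) := by
      simp only [endsMap_val, Nat.dist]
      cases hu : u.1 <;> cases hv : v.1 <;> simp_all <;> omega
    refine iff_of_false (fun h => ?_) fun h => huv h.1
    cases r with
    | adj =>
      have := dist_lt_of_sampleAdj hlong (mem_range_endsMap.1 ⟨u, rfl⟩) h
      omega
    | succ =>
      simp only [sampleRel] at h
      rw [Nat.dist] at hdist
      omega

/-- The first vertex of the left copy and the last vertex of the right copy of `Fin (L + 1)`. -/
def truncatedEnds (L : ℕ) : Fin 2 → Bool × Fin (L + 1) := ![(false, 0), (true, Fin.last L)]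

lemma endsMap_comp_truncatedEnds (hL : L + 1 ≤ m + 1) :
    endsMap hL ∘ truncatedEnds L = ends m := by
  funext a
  fin_cases a <;> simp [Fin.ext_iff, endsMap_val, truncatedEnds, ends]
  omega

lemma localType_ends_eq (hm : 2 * (L + 1) + D < m + 1) {ω : Sample (m + 1)}
    (hball : EndBallsWithin (2 ^ k + 1) (L + 1) ω)
    (hlong : ¬ HasLongEdge (endZone (m + 1) (L + 1)) D ω) :
    localType (sampleRel ω) k (ends m) =
      localType (endsRel (ω ∘ endsEdge (by omega))) k (truncatedEnds L) := by
  have hrel := sampleRel_endsMap_iff hm hlong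
  have hinj : Function.Injective (endsMap (by omega : L + 1 ≤ m + 1)) :=
    endsMap_injective (by omega)
  rw [← endsMap_comp_truncatedEnds (by omega : L + 1 ≤ m + 1),
    ← localType_comp_of_isInterior hrel hinj fun a x' hx' y hy => ?_]
  have hay := (hx'.map hrel hinj).trans hy
  rw [← Function.comp_apply (f := endsMap _), endsMap_comp_truncatedEnds] at hay
  exact mem_range_endsMap.2 (hball a y hay)

lemma abs_measureReal_sub_le_of_ae {Ω : Type*} [MeasurableSpace Ω] {μ : Measure Ω}
    [IsFiniteMeasure μ] {A B C : Set Ω} (h : ∀ᵐ ω ∂μ, ω ∉ C → (ω ∈ A ↔ ω ∈ B)) :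
    |μ.real A - μ.real B| ≤ μ.real C := by
  have hle {A B : Set Ω} (h : ∀ᵐ ω ∂μ, ω ∉ C → ω ∈ A → ω ∈ B) :
      μ.real A ≤ μ.real B + μ.real C := by
    have hsub : A ≤ᵐ[μ] (B ∪ C : Set Ω) := by
      filter_upwards [h] with ω hω hA
      exact or_iff_not_imp_right.2 fun hC => hω hC hA
    exact (ENNReal.toReal_mono (measure_ne_top _ _) (measure_mono_ae hsub)).trans
      (measureReal_union_le B C)
  rw [abs_sub_le_iff, sub_le_iff_le_add', sub_le_iff_le_add']
  exact ⟨hle (h.mono fun ω hω hC => (hω hC).1), hle (h.mono fun ω hω hC => (hω hC).2)⟩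

lemma exists_eventually_abs_measure_ends_sub_le (hp : Summable fun i => (p i : ℝ)) (k : ℕ)
    (S : Set (LocalType (plusRel 2) k 2)) {ε : ℝ} (hε : 0 < ε) :
    ∃ a : ℝ, ∀ᶠ m in atTop, |(graphMeasure p (m + 1)).real
      {ω | localType (sampleRel ω) k (ends m) ∈ S} - a| ≤ ε := by
  obtain ⟨L, hL⟩ := exists_measure_not_endBallsWithin_le hp (2 ^ k + 1) (half_pos hε)
  obtain ⟨D, hD⟩ := (eventually_measure_hasLongEdge_le hp (2 * (L + 1)) (half_pos hε)).exists
  refine ⟨(coinMeasure fun e : Bool × EdgeIdx (L + 1) => p (edgeLength e.2)).real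
    {τ | localType (endsRel τ) k (truncatedEnds L) ∈ S}, ?_⟩
  filter_upwards [eventually_gt_atTop (2 * (L + 1) + D)] with m hm
  have hcoins := coinMeasure_real_comp_mem (fun e => p (edgeLength e))
    (endsEdge_injective (by omega : 2 * (L + 1) ≤ m + 1))
    {τ | localType (endsRel τ) k (truncatedEnds L) ∈ S}
  simp only [Function.comp_def, edgeLength_endsEdge] at hcoins
  rw [← hcoins]
  calc _ ≤ (graphMeasure p (m + 1)).real ({ω | ¬ EndBallsWithin (2 ^ k + 1) (L + 1) ω} ∪
        {ω | HasLongEdge (endZone (m + 1) (L + 1)) D ω}) := by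
        refine abs_measureReal_sub_le_of_ae (ae_of_all _ fun ω hω => ?_)
        rw [Set.mem_union, not_or] at hω
        exact Iff.of_eq <| congrArg (· ∈ S) <|
          localType_ends_eq (by omega) (not_not.1 hω.1) hω.2
    _ ≤ ε / 2 + ε / 2 := (measureReal_union_le _ _).trans
        (add_le_add (hL m) (hD _ _ (card_endZone_le _ _)))
    _ = ε := add_halves ε

lemma exists_tendsto_of_eventually_abs_sub_le {u : ℕ → ℝ}
    (h : ∀ ε > 0, ∃ a, ∀ᶠ n in atTop, |u n - a| ≤ ε) : ∃ ℓ, Tendsto u atTop (nhds ℓ) := by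
  refine cauchySeq_tendsto_of_complete (Metric.cauchySeq_iff'.2 fun ε hε => ?_)
  obtain ⟨a, ha⟩ := h (ε / 3) (by positivity)
  obtain ⟨N, hN⟩ := eventually_atTop.1 ha
  refine ⟨N, fun n hn => ?_⟩
  have htriangle := dist_triangle_right (u n) (u N) a
  have hn' : dist (u n) a ≤ ε / 3 := hN n hn
  have hN' : dist (u N) a ≤ ε / 3 := hN N le_rfl
  linarith

theorem exists_tendsto_measure_localType_ends (hp : Summable fun i => (p i : ℝ)) (k : ℕ)
    (S : Set (LocalType (plusRel 2) k 2)) :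
    ∃ ℓ, Tendsto (fun m => (graphMeasure p (m + 1)).real
      {ω | localType (sampleRel ω) k (ends m) ∈ S}) atTop (nhds ℓ) :=
  exists_tendsto_of_eventually_abs_sub_le fun _ hε =>
    exists_eventually_abs_measure_ends_sub_le hp k S hε

end Ends

/-! ### Convergence -/

section Convergence

open MeasureTheory unitInterval

variable {m m' : ℕ} {p : ℕ → I}

lemma realize_iff_of_localType_ends_eq {ψ : Lplus.Sentence} {ω : Sample (m + 1)}
    {ω' : Sample (m' + 1)} (hω : (graphMeasure p (m + 1)).real {ω} ≠ 0)
    (hω' : (graphMeasure p (m' + 1)).real {ω'} ≠ 0)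
    (hrich : IsRich p (2 + quantifierRank ψ) (quantifierRank ψ) ω)
    (hrich' : IsRich p (2 + quantifierRank ψ) (quantifierRank ψ) ω')
    (hends : localType (sampleRel ω) (quantifierRank ψ) (ends m) =
      localType (sampleRel ω') (quantifierRank ψ) (ends m')) :
    @Language.Sentence.Realize _ _ (plusStructure ω) ψ ↔
      @Language.Sentence.Realize _ _ (plusStructure ω') ψ := by
  let := plusStructure ω
  let := plusStructure ω'
  have hrel : binaryRel Lplus (Fin (m + 1)) = sampleRel ω := binaryRel_plusStructure ω
  have hrel' : binaryRel Lplus (Fin (m' + 1)) = sampleRel ω' := binaryRel_plusStructure ω'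
  refine sentence_realize_of_localType_eq isBinary_Lplus ψ (w := ends m) (w' := ends m')
    ?_ ?_ ?_ ?_
  · rw [hrel, hrel']
    exact hrich'.farExtends hω ⟨plusFunc.one, rfl⟩ ⟨plusFunc.last, rfl⟩
  · rw [hrel, hrel']
    exact hrich.farExtends hω' ⟨plusFunc.one, rfl⟩ ⟨plusFunc.last, rfl⟩
  · rintro (_ | _)
    · exact ⟨0, rfl, rfl⟩
    · exact ⟨1, rfl, rfl⟩
  · rw [hrel, hrel']
    exact hends

/-- The end types of the rich outcomes of positive probability in which `ψ` holds. -/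
def satisfyingEndTypes (p : ℕ → I) (ψ : Lplus.Sentence) :
    Set (LocalType (plusRel 2) (quantifierRank ψ) 2) :=
  {t | ∃ (m : ℕ) (ω : Sample (m + 1)), (graphMeasure p (m + 1)).real {ω} ≠ 0 ∧
    IsRich p (2 + quantifierRank ψ) (quantifierRank ψ) ω ∧
    @Language.Sentence.Realize _ _ (plusStructure ω) ψ ∧
    localType (sampleRel ω) (quantifierRank ψ) (ends m) = t}

lemma abs_measure_realize_sub_le (p : ℕ → I) (ψ : Lplus.Sentence) (m : ℕ) :
    |(graphMeasure p (m + 1)).real {ω | @Language.Sentence.Realize _ _ (plusStructure ω) ψ} -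
      (graphMeasure p (m + 1)).real
        {ω | localType (sampleRel ω) (quantifierRank ψ) (ends m) ∈ satisfyingEndTypes p ψ}| ≤
    (graphMeasure p (m + 1)).real
      {ω | ¬ IsRich p (2 + quantifierRank ψ) (quantifierRank ψ) ω} := by
  refine abs_measureReal_sub_le_of_ae (ae_iff_of_countable.2 fun ω hω hrich => ?_)
  have hpos : (graphMeasure p (m + 1)).real {ω} ≠ 0 :=
    ENNReal.toReal_ne_zero.2 ⟨hω, measure_ne_top _ _⟩
  refine ⟨fun hψ => ⟨m, ω, hpos, not_not.1 hrich, hψ, rfl⟩, ?_⟩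
  rintro ⟨m', ω', hpos', hrich', hψ', hends⟩
  exact (realize_iff_of_localType_ends_eq hpos' hpos hrich' (not_not.1 hrich) hends).1 hψ'

end Convergence

/-- If `0 ≤ p i < 1` for all `i` and `∏_{i=1}^∞ (1 - p i) > 0` (i.e. the
partial products are bounded below by a positive constant), then for every sentence `ψ` of
the language `L₊`, `Prob(n, p̄; ψ)` converges as `n → ∞`. -/
theorem statement_4 (p : ℕ → ℝ) (hp : ∀ i, 0 ≤ p i ∧ p i < 1)
    (hprod : ∃ c : ℝ, 0 < c ∧ ∀ n : ℕ, c ≤ ∏ i ∈ Finset.Icc 1 n, (1 - p i))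
    (ψ : Lplus.Sentence) :
    ∃ ℓ : ℝ, Tendsto (fun n => ProbPlus p n ψ) atTop (nhds ℓ) := by
  obtain ⟨c, hc, hle⟩ := hprod
  have hsum : Summable p :=
    summable_of_le_prod_one_sub (fun i => (hp i).1) (fun i => (hp i).2.le) hc hle
  lift p to ℕ → unitInterval using fun i => ⟨(hp i).1, (hp i).2.le⟩
  obtain ⟨ℓ, hends⟩ := exists_tendsto_measure_localType_ends hsum _ (satisfyingEndTypes p ψ)
  have hrich := (tendsto_measure_not_isRich hsum (fun i => (hp i).2) (2 + quantifierRank ψ)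
    (quantifierRank ψ)).comp (tendsto_add_atTop_nat 1)
  have hdiff := squeeze_zero_norm
    (fun m => (Real.norm_eq_abs _).trans_le (abs_measure_realize_sub_le p ψ m)) hrich
  refine ⟨ℓ, (tendsto_add_atTop_iff_nat 1).1 ?_⟩
  simpa [ProbPlus, pr_eq_graphMeasure_real] using hdiff.add hends

end RandomGraph
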